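/- arXiv:1811.11324 — 2 statements merged into one kernel-verified Lean document; each statement's English description precedes it below -/
import Mathlib

section
/- Let T be a scalar Calderón–Zygmund operator on ℝ^d with modulus of continuity ω satisfying the Dini condition, let ρ ∈ (2,∞), and assume the variation operator V_ρ(T_*) is bounded on L^q(ℝ^d) for some q ∈ (1,∞). Then V_ρ(T_*) is of weak type (1,1): there is a constant C such that for every f ∈ L^1(ℝ^d) and every λ > 0, |{x ∈ ℝ^d : V_ρ(T_* f)(x) > λ}| ≤ C λ^{−1} ‖f‖_{L^1(ℝ^d)}. -/
open MeasureTheory Set Filter Classical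
open scoped ENNReal
noncomputable section

abbrev Rd (d : ℕ) := EuclideanSpace ℝ (Fin d)

/-- An axis-parallel (half-open) cube in `ℝ^d`, given by its center and side length. -/
structure Cube (d : ℕ) where
  c : Fin d → ℝ
  l : ℝ
  hl : 0 < l

/-- The underlying (half-open) set of a cube. -/
def Cube.set {d : ℕ} (Q : Cube d) : Set (Rd d) :=
  {y | ∀ i, Q.c i - Q.l / 2 ≤ y i ∧ y i < Q.c i + Q.l / 2}

/-- The (half-open) set `tQ`, the cube concentric with `Q` of side length `t·ℓ(Q)`. -/
def Cube.dilate {d : ℕ} (Q : Cube d) (t : ℝ) : Set (Rd d) :=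
  {y | ∀ i, Q.c i - t * Q.l / 2 ≤ y i ∧ y i < Q.c i + t * Q.l / 2}

/-- The volume `|Q| = ℓ(Q)^d` of a cube, as an extended nonnegative real. -/
def Cube.vol {d : ℕ} (Q : Cube d) : ℝ≥0∞ := ENNReal.ofReal (Q.l ^ d)

/-- `Q` is one of the dyadic subcubes of `Q₀` obtained by repeated subdivision of `Q₀`
into `2^d` congruent subcubes. -/
def IsDyadicSubcube {d : ℕ} (Q₀ Q : Cube d) : Prop :=
  ∃ (k : ℕ) (m : Fin d → ℕ), (∀ i, m i < 2 ^ k) ∧ Q.l = Q₀.l / 2 ^ k ∧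
    ∀ i, Q.c i = Q₀.c i - Q₀.l / 2 + ((m i : ℝ) + 1 / 2) * (Q₀.l / 2 ^ k)
/-- A scalar Calderón–Zygmund operator on `ℝ^d` with Dini modulus of continuity:
a linear operator `T` bounded on `L²(ℝ^d)` associated with a kernel `K` satisfying the
size condition and the `ω`-smoothness condition, where `ω` is increasing, subadditive,
vanishes at `0`, and satisfies the Dini condition `∫₀¹ ω(t) dt/t < ∞`. -/
structure CZO (d : ℕ) where
  K : Rd d → Rd d → ℝ
  measK : Measurable (Function.uncurry K)
  ω : ℝ → ℝ
  Cst : ℝ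
  hCst : 0 < Cst
  ω_mono : MonotoneOn ω (Set.Ici 0)
  ω_zero : ω 0 = 0
  ω_subadd : ∀ s t : ℝ, 0 ≤ s → 0 ≤ t → ω (s + t) ≤ ω s + ω t
  dini : IntegrableOn (fun t => ω t / t) (Set.Ioo (0 : ℝ) 1)
  size : ∀ x y : Rd d, x ≠ y → |K x y| ≤ Cst / dist x y ^ d
  smooth : ∀ x x' y : Rd d, x ≠ y → dist x x' ≤ dist x y / 2 →
    |K x y - K x' y| + |K y x - K y x'| ≤ Cst * ω (dist x x' / dist x y) / dist x y ^ d
  T : Lp ℝ 2 (volume : Measure (Rd d)) →L[ℝ] Lp ℝ 2 (volume : Measure (Rd d))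
  assoc : ∀ f : Lp ℝ 2 (volume : Measure (Rd d)),
    ∀ᵐ x ∂(volume : Measure (Rd d)), x ∉ tsupport (f : Rd d → ℝ) →
      (T f : Rd d → ℝ) x = ∫ y, K x y * f y

/-- The truncated singular integral `T_ε f(x) = ∫_{|x-y|>ε} K(x,y) f(y) dy`. -/
def CZO.trunc {d : ℕ} (S : CZO d) (ε : ℝ) (f : Rd d → ℝ) (x : Rd d) : ℝ :=
  ∫ y in {y : Rd d | ε < dist x y}, S.K x y * f y

/-- The variation operator `V_ρ(T_* f)(x)`, with values in `[0,∞]`: the supremum over all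
strictly decreasing positive sequences `ε_i → 0` of `(Σ_i |T_{ε_{i+1}}f(x) - T_{ε_i}f(x)|^ρ)^{1/ρ}`. -/
def CZO.var {d : ℕ} (S : CZO d) (ρ : ℝ) (f : Rd d → ℝ) (x : Rd d) : ℝ≥0∞ :=
  ⨆ (ε : ℕ → ℝ) (_ : StrictAnti ε ∧ (∀ i, 0 < ε i) ∧ Tendsto ε atTop (nhds 0)),
    (∑' i : ℕ, ENNReal.ofReal |S.trunc (ε (i + 1)) f x - S.trunc (ε i) f x| ^ ρ) ^ (1 / ρ)

/-- `V_ρ(T_*)` is bounded on `L^q(ℝ^d)`. -/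
def CZO.VarBdd {d : ℕ} (S : CZO d) (ρ q : ℝ) : Prop :=
  ∃ A : ℝ, 0 < A ∧ ∀ f : Rd d → ℝ, Measurable f →
    ∫⁻ x, S.var ρ f x ^ q ∂volume ≤ ENNReal.ofReal A * ∫⁻ x, ENNReal.ofReal |f x| ^ q ∂volume

/-- The weak `(1,1)` operator (quasi-)norm `‖V_ρ(T_*)‖_{L¹ → L^{1,∞}}`. -/
def CZO.weak11Norm {d : ℕ} (S : CZO d) (ρ : ℝ) : ℝ≥0∞ :=
  sInf {A : ℝ≥0∞ | ∀ f : Rd d → ℝ, Measurable f → ∀ t : ℝ, 0 < t →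
    ENNReal.ofReal t * volume {x | ENNReal.ofReal t < S.var ρ f x} ≤
      A * ∫⁻ x, ENNReal.ofReal |f x| ∂volume}

/-- The local grand maximal truncated operator `M_{V_ρ(T_*),Q₀}`. -/
def CZO.grandMaxLoc {d : ℕ} (S : CZO d) (ρ : ℝ) (Q₀ : Cube d) (f : Rd d → ℝ) (x : Rd d) : ℝ≥0∞ :=
  if x ∈ Q₀.set then
    ⨆ (Q : Cube d) (_ : x ∈ Q.set ∧ Q.set ⊆ Q₀.set),
      essSup (fun ξ => S.var ρ ((Q₀.dilate 3 \ Q.dilate 3).indicator f) ξ)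
        (volume.restrict Q.set)
  else 0

/-- The (global) grand maximal truncated operator `M_{V_ρ(T_*)}`. -/
def CZO.grandMax {d : ℕ} (S : CZO d) (ρ : ℝ) (f : Rd d → ℝ) (x : Rd d) : ℝ≥0∞ :=
  ⨆ (Q : Cube d) (_ : x ∈ Q.set),
    essSup (fun ξ => S.var ρ (((Q.dilate 3)ᶜ).indicator f) ξ) (volume.restrict Q.set)

/-- The Hardy–Littlewood maximal operator over cubes, with values in `[0,∞]`. -/
def maxCube {d : ℕ} (f : Rd d → ℝ) (x : Rd d) : ℝ≥0∞ :=
  ⨆ (Q : Cube d) (_ : x ∈ Q.set), Q.vol⁻¹ * ∫⁻ y in Q.set, ENNReal.ofReal |f y|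

/-- The average `⟨|f|⟩_{3Q} = (1/|3Q|) ∫_{3Q} |f|`. -/
def avg3 {d : ℕ} (Q : Cube d) (f : Rd d → ℝ) : ℝ :=
  (∫ y in Q.dilate 3, |f y|) / (3 * Q.l) ^ d
/-- The Euclidean norm of a vector in `ℝ^n`. -/
def enorm' {n : ℕ} (v : Fin n → ℝ) : ℝ := Real.sqrt (∑ i, v i ^ 2)

/-- The operator norm (with respect to Euclidean norms) of an `n × n` real matrix. -/
def matOpNorm {n : ℕ} (A : Matrix (Fin n) (Fin n) ℝ) : ℝ :=
  sSup ((fun v => enorm' (A.mulVec v)) '' {v | enorm' v ≤ 1})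

/-- The spectral power `A^s` of a symmetric matrix `A = U D Uᵗ`, defined as `U D^s Uᵗ`
(junk value `A` if `A` is not symmetric). -/
def Matrix.rpowH {n : ℕ} (A : Matrix (Fin n) (Fin n) ℝ) (s : ℝ) : Matrix (Fin n) (Fin n) ℝ :=
  if h : A.IsHermitian then
    (h.eigenvectorUnitary : Matrix (Fin n) (Fin n) ℝ) *
      Matrix.diagonal (fun i => h.eigenvalues i ^ s) *
      star (h.eigenvectorUnitary : Matrix (Fin n) (Fin n) ℝ)
  else A

/-- A matrix weight on `ℝ^d`: a measurable function with a.e. symmetric positive definite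
values whose operator norm is locally integrable. -/
structure MatrixWeight (d n : ℕ) where
  W : Rd d → Matrix (Fin n) (Fin n) ℝ
  meas : ∀ i j, Measurable fun x => W x i j
  pd : ∀ᵐ x : Rd d, (W x).PosDef
  locInt : LocallyIntegrable (fun x => matOpNorm (W x)) (volume : Measure (Rd d))

/-- The matrix `A_p` characteristic `[W]_{A_p}`. -/
def MatrixWeight.apConst {d n : ℕ} (W : MatrixWeight d n) (p : ℝ) : ℝ≥0∞ :=
  ⨆ Q : Cube d, Q.vol⁻¹ * ∫⁻ x in Q.set,
    (Q.vol⁻¹ * ∫⁻ t in Q.set,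
        ENNReal.ofReal (matOpNorm ((W.W x).rpowH (1 / p) * (W.W t).rpowH (-(1 / p))))
          ^ (p / (p - 1))) ^ (p - 1)

/-- The norm of `f` in `L^p(W)`. -/
def MatrixWeight.wNorm {d n : ℕ} (W : MatrixWeight d n) (p : ℝ)
    (f : Rd d → Fin n → ℝ) : ℝ≥0∞ :=
  (∫⁻ x, ENNReal.ofReal (enorm' (((W.W x).rpowH (1 / p)).mulVec (f x))) ^ p) ^ (1 / p)

/-- The Euclidean length `|V_ρ(T_{n,*} f⃗)(x)|` of the componentwise variation vector
(with values in `[0,∞]`). -/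
def CZO.varVecNorm {d : ℕ} (n : ℕ) (S : CZO d) (ρ : ℝ) (f : Rd d → Fin n → ℝ)
    (x : Rd d) : ℝ≥0∞ :=
  (∑ j : Fin n, S.var ρ (fun y => f y j) x ^ (2 : ℝ)) ^ ((1 : ℝ) / 2)

/-- An `η`-sparse family of cubes. -/
def IsSparse {d : ℕ} (η : ℝ) (F : Set (Cube d)) : Prop :=
  ∃ E : Cube d → Set (Rd d),
    (∀ Q ∈ F, E Q ⊆ Q.set ∧ MeasurableSet (E Q) ∧ ENNReal.ofReal η * Q.vol ≤ volume (E Q)) ∧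
    F.PairwiseDisjoint E

/-- The convex body average `⟨⟨f⃗⟩⟩_{tQ}` of a vector-valued function over the cube `tQ`. -/
def convexBodyAvg {d n : ℕ} (f : Rd d → Fin n → ℝ) (Q : Cube d) (t : ℝ) :
    Set (Fin n → ℝ) :=
  {v | ∃ φ : Rd d → ℝ, Measurable φ ∧ (∀ y, |φ y| ≤ 1) ∧
    ∀ j, v j = (∫ y in Q.dilate t, φ y * f y j) / (t * Q.l) ^ d}

/-!
Apply the Calderón–Zygmund decomposition at height `t`, with Vitali balls in place of dyadic cubes:
`f = g + ∑ b_j`. The good part is controlled by the `L^q` bound and Chebyshev's inequality. Off the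
dilated balls, a truncation increment is an integral over an annulus, and it treats the bad pieces
in two ways. A piece whose ball does not meet the boundary of the annulus contributes, by
cancellation, a Dini tail; these contributions are summed in `ℓ¹`. A piece cut by a boundary sphere
has no cancellation, only size; since `2 ≤ ρ`, these are summed in `ℓ²`. If `s_j` is the ratio of
the radius of the ball to its distance from `x`, Cauchy–Schwarz with the weights `s_j^{∓1/2}` gives
two factors. The first is a sum over the balls meeting one sphere, hence at most a multiple of `t`,
because the inverse square root of the distance to the sphere is integrable near it. The second is
the tail for the modulus `√s`, which satisfies the Dini condition.
-/

section LpSums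

variable {ι : Type*}

lemma rpow_tsum_add_rpow_le {p : ℝ} (hp : 1 ≤ p) (f g : ι → ℝ≥0∞) :
    (∑' i, (f i + g i) ^ p) ^ (1 / p) ≤
      (∑' i, f i ^ p) ^ (1 / p) + (∑' i, g i ^ p) ^ (1 / p) := by
  let _ : MeasurableSpace ι := ⊤
  simpa only [lintegral_count, Pi.add_apply] using
    ENNReal.lintegral_Lp_add_le (μ := Measure.count) (f := f) (g := g)
      measurable_from_top.aemeasurable measurable_from_top.aemeasurable hp

lemma rpow_tsum_rpow_anti {r p : ℝ} (hr : 0 < r) (hrp : r ≤ p) (f : ι → ℝ≥0∞) :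
    (∑' i, f i ^ p) ^ (1 / p) ≤ (∑' i, f i ^ r) ^ (1 / r) := by
  set N := (∑' i, f i ^ r) ^ (1 / r) with hN
  have split (a : ℝ≥0∞) : a ^ p = a ^ (p - r) * a ^ r := by
    rw [← ENNReal.rpow_add_of_nonneg _ _ (sub_nonneg.2 hrp) hr.le, sub_add_cancel]
  have le_N (i : ι) : f i ≤ N := by
    rw [hN, one_div, ENNReal.le_rpow_inv_iff hr]
    exact ENNReal.le_tsum i
  have N_rpow : ∑' i, f i ^ r = N ^ r := by
    rw [hN, ← ENNReal.rpow_mul, one_div_mul_cancel hr.ne', ENNReal.rpow_one]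
  rw [one_div, ENNReal.rpow_inv_le_iff (hr.trans_le hrp)]
  calc ∑' i, f i ^ p ≤ ∑' i, N ^ (p - r) * f i ^ r :=
        ENNReal.tsum_le_tsum fun i => by rw [split (f i)]; gcongr; exact le_N i
    _ = N ^ p := by rw [ENNReal.tsum_mul_left, N_rpow, ← split]

lemma sq_tsum_le_tsum_mul_tsum {a p w : ι → ℝ≥0∞} (h : ∀ j, a j ^ 2 ≤ p j * w j) :
    (∑' j, a j) ^ 2 ≤ (∑' j, p j) * ∑' j, w j := by
  let _ : MeasurableSpace ι := ⊤
  have holder := ENNReal.lintegral_mul_le_Lp_mul_Lq (μ := Measure.count)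
    Real.HolderConjugate.two_two
    (f := fun j => p j ^ (2⁻¹ : ℝ)) (g := fun j => w j ^ (2⁻¹ : ℝ))
    measurable_from_top.aemeasurable measurable_from_top.aemeasurable
  simp only [lintegral_count, Pi.mul_apply, ENNReal.rpow_inv_rpow two_ne_zero, one_div] at holder
  rw [← ENNReal.mul_rpow_of_nonneg _ _ (by norm_num), ENNReal.le_rpow_inv_iff two_pos,
    ENNReal.rpow_two] at holder
  refine le_trans ?_ holder
  gcongr with j
  rw [← ENNReal.mul_rpow_of_nonneg _ _ (by norm_num), ENNReal.le_rpow_inv_iff two_pos,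
    ENNReal.rpow_two]
  exact h j

/- Cauchy–Schwarz in `j` for each `i`, after bounding one of the two factors `m i j` by `n j`; the
other one is then summed over `i`. -/
lemma tsum_sq_tsum_indicator_le {κ : Type*} {s : κ → Set ι} {a p w n : ι → ℝ≥0∞}
    {m : κ → ι → ℝ≥0∞} {M : ℝ≥0∞} (hm : ∀ j, ∑' i, m i j ≤ n j) (ha : ∀ j, a j ^ 2 ≤ p j * w j)
    (hM : ∀ i, ∑' j, (s i).indicator (fun j => p j * n j) j ≤ M) :
    ∑' i, (∑' j, (s i).indicator (fun j => a j * m i j) j) ^ 2 ≤ M * ∑' j, w j * n j := by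
  have sq_le (i : κ) (j : ι) : (s i).indicator (fun j => a j * m i j) j ^ 2 ≤
      (s i).indicator (fun j => p j * n j) j * (w j * m i j) := by
    by_cases hj : j ∈ s i
    · rw [indicator_of_mem hj, indicator_of_mem hj]
      calc (a j * m i j) ^ 2 = a j ^ 2 * m i j * m i j := by ring
        _ ≤ p j * w j * n j * m i j := by
          gcongr
          exacts [ha j, (ENNReal.le_tsum i).trans (hm j)]
        _ = p j * n j * (w j * m i j) := by ring
    · simp [hj]
  calc ∑' i, (∑' j, (s i).indicator (fun j => a j * m i j) j) ^ 2
      ≤ ∑' i, M * ∑' j, w j * m i j := ENNReal.tsum_le_tsum fun i =>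
        (sq_tsum_le_tsum_mul_tsum (sq_le i)).trans (by gcongr; exact hM i)
    _ = M * ∑' j, w j * ∑' i, m i j := by
      rw [ENNReal.tsum_mul_left, ENNReal.tsum_comm]
      simp only [ENNReal.tsum_mul_left]
    _ ≤ M * ∑' j, w j * n j := by
      gcongr with j
      exact hm j

end LpSums

section TailWeight

open Module

variable {E : Type*} [NormedAddCommGroup E] [NormedSpace ℝ E]

/-- The radial weight `φ(l/|v|) |v|^{-d}` on a `d`-dimensional space. It bounds, at displacement `v`
from the center, the contribution of a function supported in a ball of radius `l`. -/
def tailWeight (φ : ℝ → ℝ) (l : ℝ) (v : E) : ℝ≥0∞ :=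
  ENNReal.ofReal (φ (l / ‖v‖) / ‖v‖ ^ finrank ℝ E)

lemma tailWeight_one_sq {l : ℝ} (hl : 0 < l) {v : E} (hv : v ≠ 0) :
    tailWeight (fun _ => 1) l v ^ 2 =
      tailWeight (fun s => (√s)⁻¹) l v * tailWeight Real.sqrt l v := by
  have : 0 < ‖v‖ := norm_pos_iff.2 hv
  have : 0 < √(l / ‖v‖) := Real.sqrt_pos.2 (by positivity)
  rw [tailWeight, tailWeight, tailWeight, ← ENNReal.ofReal_pow (by positivity),
    ← ENNReal.ofReal_mul (by positivity)]
  congr 1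
  field_simp

lemma monotone_comp_max_zero {φ : ℝ → ℝ} (hφ : MonotoneOn φ (Ici 0)) :
    Monotone fun s => φ (max s 0) :=
  fun _ _ h => hφ (mem_Ici.2 (le_max_right _ _)) (mem_Ici.2 (le_max_right _ _))
    (max_le_max_right _ h)

lemma tailWeight_comp_max_zero (φ : ℝ → ℝ) {l : ℝ} (hl : 0 ≤ l) :
    (tailWeight (fun s => φ (max s 0)) l : E → ℝ≥0∞) = tailWeight φ l := by
  ext v
  rw [tailWeight, tailWeight, max_eq_left (div_nonneg hl (norm_nonneg v))]

lemma measurable_tailWeight [MeasurableSpace E] [OpensMeasurableSpace E] {φ : ℝ → ℝ}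
    (hφ : MonotoneOn φ (Ici 0)) {l : ℝ} (hl : 0 ≤ l) :
    Measurable (tailWeight φ l : E → ℝ≥0∞) := by
  rw [← tailWeight_comp_max_zero φ hl]
  exact (((monotone_comp_max_zero hφ).measurable.comp (measurable_norm.const_div l)).div
    (measurable_norm.pow_const _)).ennreal_ofReal

end TailWeight

section RadialIntegrals

open Metric Module

variable {E : Type*} [NormedAddCommGroup E] [NormedSpace ℝ E] [MeasurableSpace E]
  (μ : Measure E)

/-- The integral of `tailWeight φ l` over `l < ‖v‖`, which by scaling does not depend on `l`. -/
def tailMass (φ : ℝ → ℝ) : ℝ≥0∞ :=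
  finrank ℝ E * μ (ball 0 1) * ∫⁻ s in Ioo (0 : ℝ) 1, ENNReal.ofReal (φ s / s)

variable [FiniteDimensional ℝ E] [μ.IsAddHaarMeasure]

variable {μ} in
lemma tailMass_ne_top {φ : ℝ → ℝ} (hφ : ∫⁻ s in Ioo (0 : ℝ) 1, ENNReal.ofReal (φ s / s) ≠ ∞) :
    tailMass μ φ ≠ ∞ :=
  ENNReal.mul_ne_top (ENNReal.mul_ne_top (ENNReal.natCast_ne_top _) measure_ball_lt_top.ne) hφ

variable [BorelSpace E]

lemma lintegral_fun_norm_addHaar [Nontrivial E] {f : ℝ → ℝ≥0∞} (hf : Measurable f) :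
    ∫⁻ x, f ‖x‖ ∂μ = finrank ℝ E * μ (ball 0 1) *
      ∫⁻ r in Ioi (0 : ℝ), ENNReal.ofReal (r ^ (finrank ℝ E - 1)) * f r := by
  let g : Ioi (0 : ℝ) → ℝ≥0∞ := fun r => f r
  have hg : Measurable g := hf.comp measurable_subtype_coe
  calc ∫⁻ x, f ‖x‖ ∂μ = ∫⁻ x : ({0}ᶜ : Set E), f ‖x.1‖ ∂μ.comap (↑) := by
        rw [lintegral_subtype_comap (measurableSet_singleton _).compl fun x => f ‖x‖,
          restrict_compl_singleton]
    _ = ∫⁻ x, g x.2 ∂μ.toSphere.prod (.volumeIoiPow (finrank ℝ E - 1)) := by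
        simpa [g] using μ.measurePreserving_homeomorphUnitSphereProd.lintegral_comp
          (hg.comp measurable_snd)
    _ = μ.toSphere univ * ∫⁻ r, g r ∂.volumeIoiPow (finrank ℝ E - 1) := by
        rw [lintegral_prod (fun x => g x.2) (hg.comp measurable_snd).aemeasurable]
        simp only [lintegral_const, mul_comm]
    _ = _ := by
        have density_meas : Measurable fun r : Ioi (0 : ℝ) =>
          ENNReal.ofReal (r.1 ^ (finrank ℝ E - 1)) := by fun_prop
        rw [μ.toSphere_apply_univ, Measure.volumeIoiPow,
          lintegral_withDensity_eq_lintegral_mul _ density_meas hg]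
        exact congrArg _ (lintegral_subtype_comap measurableSet_Ioi
          fun r => ENNReal.ofReal (r ^ (finrank ℝ E - 1)) * f r)

lemma lintegral_Ioi_comp_const_div {l : ℝ} (hl : 0 < l) (φ : ℝ → ℝ) :
    ∫⁻ r in Ioi l, ENNReal.ofReal (φ (l / r) / r) =
      ∫⁻ s in Ioo (0 : ℝ) 1, ENNReal.ofReal (φ s / s) := by
  have image_eq : (fun s => l / s) '' Ioo (0 : ℝ) 1 = Ioi l := by
    ext r
    constructor
    · rintro ⟨s, ⟨hs0, hs1⟩, rfl⟩
      exact (lt_div_iff₀ hs0).2 (mul_lt_of_lt_one_right hl hs1)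
    · intro hr
      have hr0 : 0 < r := hl.trans hr
      exact ⟨l / r, ⟨by positivity, (div_lt_one hr0).2 hr⟩, div_div_cancel₀ hl.ne'⟩
  have deriv_eq (s : ℝ) (hs : s ∈ Ioo (0 : ℝ) 1) :
      HasDerivWithinAt (fun s => l / s) (-l / s ^ 2) (Ioo 0 1) s := by
    simpa using ((hasDerivAt_const s l).fun_div (hasDerivAt_id s) hs.1.ne').hasDerivWithinAt
  have inj : InjOn (fun s => l / s) (Ioo (0 : ℝ) 1) := fun _ _ _ _ h =>
    by simpa [div_eq_mul_inv, hl.ne'] using h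
  rw [← image_eq, lintegral_image_eq_lintegral_abs_deriv_mul measurableSet_Ioo deriv_eq inj]
  refine setLIntegral_congr_fun measurableSet_Ioo fun s hs => ?_
  have hs0 : 0 < s := hs.1
  rw [← ENNReal.ofReal_mul (abs_nonneg _), abs_div, abs_neg, abs_of_pos hl,
    abs_of_pos (by positivity), div_div_cancel₀ hl.ne']
  congr 1
  field_simp

lemma setLIntegral_tailWeight [Nontrivial E] {φ : ℝ → ℝ} (hφ : MonotoneOn φ (Ici 0)) {l : ℝ}
    (hl : 0 < l) :
    ∫⁻ v in {v : E | l < ‖v‖}, tailWeight φ l v ∂μ = tailMass μ φ := by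
  wlog hφm : Measurable φ generalizing φ
  · have hmono := monotone_comp_max_zero hφ
    rw [← tailWeight_comp_max_zero φ hl.le, this (hmono.monotoneOn _) hmono.measurable,
      tailMass, tailMass]
    congr 1
    refine setLIntegral_congr_fun measurableSet_Ioo fun s hs => ?_
    rw [max_eq_left hs.1.le]
  let radial : ℝ → ℝ≥0∞ :=
    (Ioi l).indicator fun r => ENNReal.ofReal (φ (l / r) / r ^ finrank ℝ E)
  have hd : finrank ℝ E ≠ 0 := finrank_pos.ne'
  calc ∫⁻ v in {v : E | l < ‖v‖}, tailWeight φ l v ∂μ = ∫⁻ v, radial ‖v‖ ∂μ := by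
        rw [← lintegral_indicator (measurableSet_lt measurable_const measurable_norm)]
        rfl
    _ = finrank ℝ E * μ (ball 0 1) *
          ∫⁻ r in Ioi (0 : ℝ), ENNReal.ofReal (r ^ (finrank ℝ E - 1)) * radial r :=
        lintegral_fun_norm_addHaar μ (Measurable.indicator (by fun_prop) measurableSet_Ioi)
    _ = finrank ℝ E * μ (ball 0 1) * ∫⁻ r in Ioi l, ENNReal.ofReal (φ (l / r) / r) := by
        simp only [radial, ← indicator_mul_right (Ioi l)
          (fun r => ENNReal.ofReal (r ^ (finrank ℝ E - 1)))]
        rw [setLIntegral_indicator measurableSet_Ioi, inter_eq_left.2 (Ioi_subset_Ioi hl.le)]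
        congr 1
        refine setLIntegral_congr_fun measurableSet_Ioi fun r hr => ?_
        have hr0 : 0 < r := hl.trans hr
        rw [← ENNReal.ofReal_mul (by positivity), ← pow_sub_one_mul hd r]
        congr 1
        field_simp
    _ = tailMass μ φ := by rw [lintegral_Ioi_comp_const_div hl, tailMass]

lemma setLIntegral_tailWeight_sub_le [Nontrivial E] {φ : ℝ → ℝ} (hφ : MonotoneOn φ (Ici 0))
    {l : ℝ} (hl : 0 < l) {c : E} {s : Set E} (hs : ∀ x ∈ s, l < dist x c) :
    ∫⁻ x in s, tailWeight φ l (x - c) ∂μ ≤ tailMass μ φ := by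
  let W : E → ℝ≥0∞ := {v : E | l < ‖v‖}.indicator (tailWeight φ l)
  have meas : MeasurableSet {v : E | l < ‖v‖} := measurableSet_lt measurable_const measurable_norm
  have W_meas : Measurable fun x => W (x - c) :=
    ((measurable_tailWeight hφ hl.le).indicator meas).comp (measurable_id.sub_const c)
  calc ∫⁻ x in s, tailWeight φ l (x - c) ∂μ ≤ ∫⁻ x in s, W (x - c) ∂μ := by
        refine setLIntegral_mono W_meas fun x hx => ?_
        have far : x - c ∈ {v : E | l < ‖v‖} := by
          simpa only [mem_ofPred_eq, dist_eq_norm] using hs x hx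
        exact (indicator_of_mem far _).ge
    _ ≤ ∫⁻ x, W (x - c) ∂μ := setLIntegral_le_lintegral s _
    _ = ∫⁻ v in {v : E | l < ‖v‖}, tailWeight φ l v ∂μ := by
        rw [lintegral_sub_right_eq_self W, lintegral_indicator meas]
    _ = _ := setLIntegral_tailWeight μ hφ hl

lemma setLIntegral_Ioo_sqrt_div_ne_top :
    ∫⁻ s in Ioo (0 : ℝ) 1, ENNReal.ofReal (√s / s) ≠ ∞ := by
  have integrable : IntegrableOn (fun s : ℝ => s ^ (-(1 / 2) : ℝ)) (Ioo 0 1) :=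
    (intervalIntegral.integrableOn_Ioo_rpow_iff one_pos).2 (by norm_num)
  refine ne_top_of_le_ne_top integrable.2.ne (setLIntegral_mono' measurableSet_Ioo fun s hs => ?_)
  rw [Real.enorm_eq_ofReal_abs]
  refine ENNReal.ofReal_le_ofReal (le_of_eq_of_le ?_ (le_abs_self _))
  rw [Real.sqrt_eq_rpow, ← Real.rpow_sub_one hs.1.ne']
  norm_num

end RadialIntegrals

section Shell

open Metric Module

lemma setLIntegral_closedBall_enorm_rpow_ne_top {p : ℝ} (hp : -1 < p) {R : ℝ} (hR : 0 < R) :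
    ∫⁻ u in closedBall (0 : ℝ) R, ‖u‖ₑ ^ p ≠ ∞ := by
  let radial : ℝ → ℝ≥0∞ := (Iic R).indicator fun r => ENNReal.ofReal r ^ p
  have integrable : IntegrableOn (fun s : ℝ => s ^ p) (Ioo 0 R) :=
    (intervalIntegral.integrableOn_Ioo_rpow_iff hR).2 hp
  have polar : ∫⁻ u in closedBall (0 : ℝ) R, ‖u‖ₑ ^ p = ∫⁻ u : ℝ, radial ‖u‖ := by
    rw [← lintegral_indicator measurableSet_closedBall]
    refine lintegral_congr fun u => ?_
    simp [radial, indicator, Real.enorm_eq_ofReal_abs]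
  rw [polar, lintegral_fun_norm_addHaar volume
    (Measurable.indicator (by fun_prop) measurableSet_Iic)]
  refine ENNReal.mul_ne_top (by finiteness) (ne_top_of_le_ne_top integrable.2.ne ?_)
  simp only [finrank_self, tsub_self, pow_zero, ENNReal.ofReal_one, one_mul]
  rw [setLIntegral_indicator measurableSet_Iic, inter_comm, Ioi_inter_Iic,
    setLIntegral_congr Ioo_ae_eq_Ioc.symm]
  refine setLIntegral_mono' measurableSet_Ioo fun s hs => ?_
  rw [ENNReal.ofReal_rpow_of_pos hs.1, Real.enorm_eq_ofReal_abs]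
  exact ENNReal.ofReal_le_ofReal (le_abs_self _)

lemma ofReal_inv_sqrt_le_enorm_rpow {a s : ℝ} (hs : 0 < s) (ha : |a| ≤ 4 * s) :
    ENNReal.ofReal (√s)⁻¹ ≤ 2 * ‖a‖ₑ ^ (-(1 / 2) : ℝ) := by
  have sqrt_eq : (√s)⁻¹ = 2 * (4 * s) ^ (-(1 / 2) : ℝ) := by
    have sqrt_four : √4 = 2 := by rw [show (4 : ℝ) = 2 ^ 2 by norm_num, Real.sqrt_sq two_pos.le]
    rw [Real.rpow_neg (by positivity), ← Real.sqrt_eq_rpow, Real.sqrt_mul (by norm_num), sqrt_four,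
      mul_inv, mul_inv_cancel_left₀ two_ne_zero]
  rw [sqrt_eq, ENNReal.ofReal_mul two_pos.le, ENNReal.ofReal_ofNat,
    ← ENNReal.ofReal_rpow_of_pos (by positivity), Real.enorm_eq_ofReal_abs]
  gcongr 2 * ?_
  rw [ENNReal.rpow_neg, ENNReal.rpow_neg, ENNReal.inv_le_inv]
  gcongr

lemma abs_dist_sub_dist_le_of_mem_closedBall {α : Type*} [PseudoMetricSpace α] {c y : α} {l : ℝ}
    (x : α) (hy : y ∈ closedBall c l) : |dist x y - dist x c| ≤ l := by
  rw [dist_comm x y, dist_comm x c]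
  exact (abs_dist_sub_le y c x).trans hy

variable {E : Type*} [NormedAddCommGroup E]

/-- The inverse square root of the distance to the unit sphere, cut off to the ball of radius `3`;
it is `∞` on the unit sphere. -/
def unitShellDensity (v : E) : ℝ≥0∞ :=
  (closedBall 0 3).indicator (fun v => ‖‖v‖ - 1‖ₑ ^ (-(1 / 2) : ℝ)) v

lemma tailWeight_inv_sqrt_le_unitShellDensity [NormedSpace ℝ E] {c x y : E} {l ε : ℝ}
    (hl : 0 < l) (hε : 0 < ε) (hx : 2 * l ≤ dist x c) (hcross : |dist x c - ε| ≤ l)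
    (hy : y ∈ closedBall c l) :
    tailWeight (fun s => (√s)⁻¹) l (x - c) ≤
      ENNReal.ofReal (2 * (2 / ε) ^ finrank ℝ E) * unitShellDensity (ε⁻¹ • (x - y)) := by
  have dist_near : |dist x y - dist x c| ≤ l := abs_dist_sub_dist_le_of_mem_closedBall x hy
  have hD : 0 < dist x c := by linarith
  rw [abs_le] at hcross dist_near
  have norm_eq : ‖ε⁻¹ • (x - y)‖ = dist x y / ε := by
    rw [norm_smul, norm_inv, Real.norm_of_nonneg hε.le, dist_eq_norm, inv_mul_eq_div]
  have mem : ε⁻¹ • (x - y) ∈ closedBall (0 : E) 3 := by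
    rw [mem_closedBall_zero_iff, norm_eq, div_le_iff₀ hε]
    linarith
  have gap : |dist x y / ε - 1| ≤ 4 * (l / dist x c) := by
    rw [div_sub_one hε.ne', abs_div, abs_of_pos hε, div_le_iff₀ hε, mul_div_assoc',
      div_mul_eq_mul_div, le_div_iff₀ hD]
    have : |dist x y - ε| ≤ 2 * l := abs_le.2 ⟨by linarith, by linarith⟩
    nlinarith
  have inv_le : 1 / dist x c ≤ 2 / ε := by
    rw [div_le_div_iff₀ hD hε]
    linarith
  rw [unitShellDensity, indicator_of_mem mem, norm_eq, tailWeight, ← dist_eq_norm]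
  calc ENNReal.ofReal ((√(l / dist x c))⁻¹ / dist x c ^ finrank ℝ E)
      = ENNReal.ofReal ((1 / dist x c) ^ finrank ℝ E) * ENNReal.ofReal (√(l / dist x c))⁻¹ := by
        rw [← ENNReal.ofReal_mul (by positivity), one_div_pow, one_div_mul_eq_div]
    _ ≤ ENNReal.ofReal ((2 / ε) ^ finrank ℝ E) *
          (2 * ‖dist x y / ε - 1‖ₑ ^ (-(1 / 2) : ℝ)) := by
        gcongr
        exact ofReal_inv_sqrt_le_enorm_rpow (by positivity) gap
    _ = _ := by
        rw [ENNReal.ofReal_mul two_pos.le, ENNReal.ofReal_ofNat]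
        ring

variable [MeasurableSpace E] [BorelSpace E]

lemma measurable_unitShellDensity : Measurable (unitShellDensity : E → ℝ≥0∞) :=
  Measurable.indicator (by fun_prop) measurableSet_closedBall

variable [NormedSpace ℝ E] [FiniteDimensional ℝ E] (μ : Measure E) [μ.IsAddHaarMeasure]

lemma lintegral_unitShellDensity_ne_top [Nontrivial E] : ∫⁻ v, unitShellDensity v ∂μ ≠ ∞ := by
  let density : ℝ → ℝ≥0∞ := fun r => ‖r - 1‖ₑ ^ (-(1 / 2) : ℝ)
  have polar : ∫⁻ v, unitShellDensity v ∂μ = ∫⁻ v, (Iic 3).indicator density ‖v‖ ∂μ :=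
    lintegral_congr fun v => by
      by_cases hv : ‖v‖ ≤ 3 <;> simp [unitShellDensity, density, indicator, hv]
  have near_one : ∫⁻ r in closedBall (1 : ℝ) 2, density r ≠ ∞ := by
    have shift : (closedBall (1 : ℝ) 2).indicator density =
        fun r => (closedBall (0 : ℝ) 2).indicator (fun u => ‖u‖ₑ ^ (-(1 / 2) : ℝ)) (r - 1) := by
      ext r
      simp [density, indicator, dist_eq_norm]
    rw [← lintegral_indicator measurableSet_closedBall, shift, lintegral_sub_right_eq_self,
      lintegral_indicator measurableSet_closedBall]
    exact setLIntegral_closedBall_enorm_rpow_ne_top (by norm_num) two_pos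
  rw [polar, lintegral_fun_norm_addHaar μ
    (Measurable.indicator (by fun_prop) measurableSet_Iic)]
  refine ENNReal.mul_ne_top (by finiteness) (ne_top_of_le_ne_top
    (ENNReal.mul_ne_top (ENNReal.ofReal_ne_top (r := 3 ^ (finrank ℝ E - 1))) near_one) ?_)
  rw [← lintegral_const_mul' _ _ ENNReal.ofReal_ne_top, ← lintegral_indicator measurableSet_Ioi,
    ← lintegral_indicator measurableSet_closedBall]
  refine lintegral_mono fun r => indicator_apply_le fun hr => ?_
  by_cases hr3 : r ≤ 3
  · have hr' : r ∈ closedBall (1 : ℝ) 2 := by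
      rw [mem_closedBall, Real.dist_eq, abs_le]
      constructor <;> linarith [mem_Ioi.1 hr]
    rw [indicator_of_mem hr', indicator_of_mem (mem_Iic.2 hr3)]
    have := mem_Ioi.1 hr
    gcongr
  · simp [hr3]

lemma lintegral_comp_inv_smul_sub {ε : ℝ} (hε : 0 < ε) {F : E → ℝ≥0∞} (hF : Measurable F) (x : E) :
    ∫⁻ y, F (ε⁻¹ • (x - y)) ∂μ = ENNReal.ofReal (ε ^ finrank ℝ E) * ∫⁻ v, F v ∂μ := by
  rw [lintegral_sub_left_eq_self (fun v => F (ε⁻¹ • v)) x,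
    ← lintegral_map hF (measurable_const_smul ε⁻¹), Measure.map_addHaar_smul μ (inv_ne_zero hε.ne'),
    lintegral_smul_measure, inv_pow, inv_inv, abs_of_pos (by positivity), smul_eq_mul]

lemma tsum_shell_tailWeight_le {ι : Type*} [Countable ι] {c : ι → E} {l : ι → ℝ} {B : ι → Set E}
    (hl : ∀ j, 0 < l j) (hB : ∀ j, MeasurableSet (B j))
    (hdisj : Pairwise (Function.onFun Disjoint B)) (hBl : ∀ j, B j ⊆ closedBall (c j) (l j))
    {x : E} (hx : ∀ j, 2 * l j ≤ dist x (c j)) {ε : ℝ} (hε : 0 < ε) :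
    ∑' j, {j | |dist x (c j) - ε| ≤ l j}.indicator
        (fun j => tailWeight (fun s => (√s)⁻¹) (l j) (x - c j) * μ (B j)) j ≤
      2 ^ (finrank ℝ E + 1) * ∫⁻ v, unitShellDensity v ∂μ := by
  set k := ENNReal.ofReal (2 * (2 / ε) ^ finrank ℝ E)
  calc ∑' j, {j | |dist x (c j) - ε| ≤ l j}.indicator
          (fun j => tailWeight (fun s => (√s)⁻¹) (l j) (x - c j) * μ (B j)) j
      ≤ ∑' j, ∫⁻ y in B j, k * unitShellDensity (ε⁻¹ • (x - y)) ∂μ := by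
        refine ENNReal.tsum_le_tsum (indicator_le fun j hj => ?_)
        rw [← setLIntegral_const]
        exact setLIntegral_mono' (hB j) fun y hy =>
          tailWeight_inv_sqrt_le_unitShellDensity (hl j) hε (hx j) hj (hBl j hy)
    _ = ∫⁻ y in ⋃ j, B j, k * unitShellDensity (ε⁻¹ • (x - y)) ∂μ :=
        (lintegral_iUnion hB hdisj _).symm
    _ ≤ ∫⁻ y, k * unitShellDensity (ε⁻¹ • (x - y)) ∂μ := setLIntegral_le_lintegral _ _
    _ = k * ENNReal.ofReal (ε ^ finrank ℝ E) * ∫⁻ v, unitShellDensity v ∂μ := by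
        rw [lintegral_const_mul' _ _ ENNReal.ofReal_ne_top,
          lintegral_comp_inv_smul_sub μ hε measurable_unitShellDensity, mul_assoc]
    _ = 2 ^ (finrank ℝ E + 1) * ∫⁻ v, unitShellDensity v ∂μ := by
        rw [← ENNReal.ofReal_mul (by positivity), mul_assoc, ← mul_pow, div_mul_cancel₀ _ hε.ne',
          ← pow_succ', ENNReal.ofReal_pow two_pos.le, ENNReal.ofReal_ofNat]

end Shell

section DisjointFamilies

variable {α ι : Type*}

lemma exists_measurable_pairwise_disjoint_subset [MeasurableSpace α] [Countable ι]
    {D : ι → Set α} (hD : ∀ j, MeasurableSet (D j)) :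
    ∃ Q : ι → Set α, (∀ j, MeasurableSet (Q j)) ∧ Pairwise (Function.onFun Disjoint Q) ∧
      (∀ j, Q j ⊆ D j) ∧ ⋃ j, Q j = ⋃ j, D j := by
  let _ := Encodable.ofCountable ι
  let D' (n : ℕ) : Set α := ⋃ j ∈ Encodable.decode₂ ι n, D j
  have D'_encode (j : ι) : D' (Encodable.encode j) = D j := by
    simp [D', Encodable.decode₂_encode]
  have subset (j : ι) : disjointed D' (Encodable.encode j) ⊆ D j :=
    (disjointed_subset D' _).trans (D'_encode j).subset
  refine ⟨fun j => disjointed D' (Encodable.encode j), fun j => ?_, fun i j hij => ?_, subset,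
    (iUnion_mono subset).antisymm ?_⟩
  · exact MeasurableSet.disjointed
      (fun n => MeasurableSet.iUnion fun k => MeasurableSet.iUnion fun _ => hD k) _
  · exact disjoint_disjointed D' (Encodable.encode_injective.ne hij)
  · rw [← Encodable.iUnion_decode₂ D, ← iUnion_disjointed (f := D')]
    refine iUnion_subset fun n y hy => ?_
    obtain ⟨j, hj, -⟩ := mem_iUnion₂.1 (disjointed_subset D' n hy)
    exact mem_iUnion.2 ⟨j, by rwa [Encodable.mem_decode₂.1 hj]⟩

lemma hasSum_indicator_of_mem {F : ι → α → ℝ} {s : ι → Set α}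
    (hs : Pairwise (Function.onFun Disjoint s)) {j : ι} {y : α} (hy : y ∈ s j) :
    HasSum (fun k => (s k).indicator (F k) y) (F j y) := by
  simpa only [indicator_of_mem hy] using hasSum_single (f := fun k => (s k).indicator (F k) y) j
    fun k hk => indicator_of_notMem (fun hk' => disjoint_left.1 (hs hk) hk' hy) _

lemma hasSum_indicator_of_notMem_iUnion (F : ι → α → ℝ) {s : ι → Set α} {y : α}
    (hy : y ∉ ⋃ j, s j) : HasSum (fun k => (s k).indicator (F k) y) 0 := by
  have vanish (k : ι) : (s k).indicator (F k) y = 0 :=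
    indicator_of_notMem (fun hk => hy (mem_iUnion.2 ⟨k, hk⟩)) _
  simpa only [vanish] using hasSum_zero

lemma summable_indicator_of_pairwise_disjoint (F : ι → α → ℝ) {s : ι → Set α}
    (hs : Pairwise (Function.onFun Disjoint s)) (y : α) :
    Summable fun k => (s k).indicator (F k) y := by
  by_cases hy : y ∈ ⋃ j, s j
  · obtain ⟨j, hj⟩ := mem_iUnion.1 hy
    exact (hasSum_indicator_of_mem hs hj).summable
  · exact (hasSum_indicator_of_notMem_iUnion F hy).summable

lemma hasSum_indicator_iUnion (f : α → ℝ) {s : ι → Set α}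
    (hs : Pairwise (Function.onFun Disjoint s)) (y : α) :
    HasSum (fun k => (s k).indicator f y) ((⋃ j, s j).indicator f y) := by
  by_cases hy : y ∈ ⋃ j, s j
  · obtain ⟨j, hj⟩ := mem_iUnion.1 hy
    rw [indicator_of_mem hy]
    exact hasSum_indicator_of_mem hs hj
  · rw [indicator_of_notMem hy]
    exact hasSum_indicator_of_notMem_iUnion (fun _ => f) hy

lemma enorm_tsum_indicator_le {F : ι → α → ℝ} {s : ι → Set α}
    (hs : Pairwise (Function.onFun Disjoint s)) {M : ℝ≥0∞} (hF : ∀ j y, ‖F j y‖ₑ ≤ M) (y : α) :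
    ‖∑' j, (s j).indicator (F j) y‖ₑ ≤ M := by
  by_cases hy : y ∈ ⋃ j, s j
  · obtain ⟨j, hj⟩ := mem_iUnion.1 hy
    rw [(hasSum_indicator_of_mem hs hj).tsum_eq]
    exact hF j y
  · simp [(hasSum_indicator_of_notMem_iUnion F hy).tsum_eq]

end DisjointFamilies

section StoppingBalls

open Metric Module

variable {E : Type*} [NormedAddCommGroup E] [NormedSpace ℝ E] [MeasurableSpace E]

/-- The radii of the closed balls around `x` on which the average of `h` exceeds `t`. -/
def stoppingRadii (μ : Measure E) (h : E → ℝ≥0∞) (t : ℝ≥0∞) (x : E) : Set ℝ :=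
  {r | 0 < r ∧ t * μ (closedBall x r) < ∫⁻ y in closedBall x r, h y ∂μ}

/-- A family of disjoint balls on which the average of `h` is at least `t`, while it is at most `t`
on the concentric balls of five times the radius and `h ≤ t` almost everywhere outside these. -/
structure IsStoppingFamily {ι : Type*} (μ : Measure E) (h : E → ℝ≥0∞) (t : ℝ≥0∞) (c : ι → E)
    (r : ι → ℝ) : Prop where
  radius_pos : ∀ j, 0 < r j
  disjoint : Pairwise (Function.onFun Disjoint fun j => closedBall (c j) (r j))
  le_setLIntegral : ∀ j, t * μ (closedBall (c j) (r j)) ≤ ∫⁻ y in closedBall (c j) (r j), h y ∂μ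
  setLIntegral_le : ∀ j,
    ∫⁻ y in closedBall (c j) (5 * r j), h y ∂μ ≤ t * μ (closedBall (c j) (5 * r j))
  ae_le : ∀ᵐ y ∂μ, y ∉ ⋃ j, closedBall (c j) (5 * r j) → h y ≤ t

lemma exists_mem_mul_notMem {s : Set ℝ} (hne : s.Nonempty) (hbdd : BddAbove s)
    (hpos : ∀ r ∈ s, 0 < r) {k : ℝ} (hk : 1 < k) : ∃ r ∈ s, k * r ∉ s := by
  obtain ⟨r₀, hr₀⟩ := hne
  have sup_pos : 0 < sSup s := (hpos r₀ hr₀).trans_le (le_csSup hbdd hr₀)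
  obtain ⟨r, hr, hlt⟩ := exists_lt_of_lt_csSup ⟨r₀, hr₀⟩ (div_lt_self sup_pos hk)
  exact ⟨r, hr, fun hkr => ((div_lt_iff₀' (by linarith)).1 hlt).not_ge (le_csSup hbdd hkr)⟩

variable [FiniteDimensional ℝ E] {μ : Measure E}

namespace IsStoppingFamily

variable {ι : Type*} {h : E → ℝ≥0∞} {t : ℝ≥0∞} {c : ι → E} {r : ι → ℝ}

lemma countable (H : IsStoppingFamily μ h t c r) : Countable ι := by
  have nonempty_interior (j : ι) : (interior (closedBall (c j) (r j))).Nonempty :=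
    (nonempty_ball.2 (H.radius_pos j)).mono ball_subset_interior_closedBall
  rw [← countable_univ_iff]
  exact PairwiseDisjoint.countable_of_nonempty_interior (fun i _ j _ hij => H.disjoint hij)
    fun j _ => nonempty_interior j

variable [BorelSpace E]

lemma mul_tsum_measure_le (H : IsStoppingFamily μ h t c r) :
    t * ∑' j, μ (closedBall (c j) (r j)) ≤ ∫⁻ y, h y ∂μ := by
  have := H.countable
  calc t * ∑' j, μ (closedBall (c j) (r j))
      ≤ ∑' j, ∫⁻ y in closedBall (c j) (r j), h y ∂μ := by
        rw [← ENNReal.tsum_mul_left]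
        exact ENNReal.tsum_le_tsum H.le_setLIntegral
    _ = ∫⁻ y in ⋃ j, closedBall (c j) (r j), h y ∂μ :=
        (lintegral_iUnion (fun _ => measurableSet_closedBall) H.disjoint _).symm
    _ ≤ ∫⁻ y, h y ∂μ := setLIntegral_le_lintegral _ _

variable [μ.IsAddHaarMeasure]

lemma setLIntegral_le_mul_measure (H : IsStoppingFamily μ h t c r) {j : ι} {Q : Set E}
    (hQ : Q ⊆ closedBall (c j) (5 * r j)) :
    ∫⁻ y in Q, h y ∂μ ≤ 5 ^ finrank ℝ E * t * μ (closedBall (c j) (r j)) := by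
  refine ((lintegral_mono_set hQ).trans (H.setLIntegral_le j)).trans_eq ?_
  rw [Measure.addHaar_closedBall_mul μ (c j) (by norm_num) (H.radius_pos j).le,
    ← Measure.addHaar_closedBall_center μ (c j), ENNReal.ofReal_pow (by norm_num),
    ENNReal.ofReal_ofNat]
  ring

end IsStoppingFamily

variable [BorelSpace E] [μ.IsAddHaarMeasure]

lemma exists_forall_stoppingRadii_le [Nontrivial E] {h : E → ℝ≥0∞} (hh : ∫⁻ y, h y ∂μ ≠ ∞)
    {t : ℝ≥0∞} (ht : t ≠ 0) : ∃ R, ∀ x, ∀ r ∈ stoppingRadii μ h t x, r ≤ R := by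
  set F := ∫⁻ y, h y ∂μ
  have unit_ne : t * μ (ball 0 1) ≠ 0 := mul_ne_zero ht (measure_ball_pos μ 0 one_pos).ne'
  refine ⟨max 1 (F / (t * μ (ball 0 1))).toReal, fun x r ⟨hr0, hr⟩ => ?_⟩
  rcases le_or_gt r 1 with hr1 | hr1
  · exact hr1.trans (le_max_left _ _)
  have mass_le : ENNReal.ofReal (r ^ finrank ℝ E) * (t * μ (ball 0 1)) ≤ F := by
    rw [mul_left_comm, ← Measure.addHaar_closedBall μ x hr0.le]
    exact hr.le.trans (setLIntegral_le_lintegral _ _)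
  rw [← ENNReal.le_div_iff_mul_le (.inl unit_ne) (.inr hh),
    ENNReal.ofReal_le_iff_le_toReal (ENNReal.div_ne_top hh unit_ne)] at mass_le
  exact ((le_self_pow₀ hr1.le finrank_pos.ne').trans mass_le).trans (le_max_right _ _)

lemma ae_le_of_stoppingRadii_eq_empty {h : E → ℝ≥0∞} (hm : Measurable h)
    (hh : ∫⁻ y, h y ∂μ ≠ ∞) (t : ℝ≥0∞) : ∀ᵐ y ∂μ, stoppingRadii μ h t y = ∅ → h y ≤ t := by
  filter_upwards [(Besicovitch.vitaliFamily μ).ae_tendsto_lintegral_div' hm hh] with y hy hempty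
  refine le_of_tendsto (hy.comp (Besicovitch.tendsto_filterAt μ y)) ?_
  filter_upwards [self_mem_nhdsWithin] with r hr
  refine ENNReal.div_le_of_le_mul (not_lt.1 fun hlt => ?_)
  exact (hempty ▸ ⟨hr, hlt⟩ : r ∈ (∅ : Set ℝ))

lemma exists_isStoppingFamily [Nontrivial E] {h : E → ℝ≥0∞} (hm : Measurable h)
    (hh : ∫⁻ y, h y ∂μ ≠ ∞) {t : ℝ≥0∞} (ht : t ≠ 0) :
    ∃ (u : Set E) (r : u → ℝ), IsStoppingFamily μ h t (fun c : u => (c : E)) r := by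
  obtain ⟨R, hR⟩ := exists_forall_stoppingRadii_le hh ht
  let Ω : Set E := {x | (stoppingRadii μ h t x).Nonempty}
  have choose_radius (x : E) :
      ∃ r, x ∈ Ω → r ∈ stoppingRadii μ h t x ∧ 5 * r ∉ stoppingRadii μ h t x := by
    by_cases hx : x ∈ Ω
    · obtain ⟨r, hr⟩ := exists_mem_mul_notMem hx ⟨R, hR x⟩ (fun _ hr => hr.1)
        (k := 5) (by norm_num)
      exact ⟨r, fun _ => hr⟩
    · exact ⟨0, fun hx' => absurd hx' hx⟩
  choose r hr using choose_radius
  obtain ⟨u, huΩ, hdisj, hcover⟩ := Vitali.exists_disjoint_subfamily_covering_enlargement_closedBall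
    Ω id r R (fun x hx => hR x _ (hr x hx).1) 5 (by norm_num)
  refine ⟨u, fun c => r c, fun c => (hr c (huΩ c.2)).1.1,
    fun i j hij => hdisj i.2 j.2 (Subtype.coe_injective.ne hij),
    fun c => (hr c (huΩ c.2)).1.2.le, fun c => not_lt.1 fun hlt => (hr c (huΩ c.2)).2
      ⟨mul_pos (by norm_num) (hr c (huΩ c.2)).1.1, hlt⟩, ?_⟩
  filter_upwards [ae_le_of_stoppingRadii_eq_empty hm hh t] with y hy hout
  refine hy (not_nonempty_iff_eq_empty.1 fun hyΩ => hout ?_)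
  obtain ⟨c, hc, hsub⟩ := hcover y hyΩ
  exact mem_iUnion.2 ⟨⟨c, hc⟩, hsub (mem_closedBall_self (hr y hyΩ).1.1.le)⟩

end StoppingBalls

section CalderonZygmundDecomposition

open Metric Module

section Pieces

variable {α : Type*} [MeasurableSpace α] (μ : Measure α) (f : α → ℝ) (Q B : Set α)

/-- The constant which, spread over `B`, has the same integral as `f` over `Q`. -/
def pieceMean : ℝ := (∫ y in Q, f y ∂μ) / μ.real B

/-- The restriction of `f` to `Q`, with its mean corrected by a constant on `B`. -/
def badPiece (y : α) : ℝ := Q.indicator f y - B.indicator (fun _ => pieceMean μ f Q B) y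

variable {μ f Q B}

lemma enorm_pieceMean_mul_measure_le (hB0 : μ B ≠ 0) (hB : μ B ≠ ∞) :
    ‖pieceMean μ f Q B‖ₑ * μ B ≤ ∫⁻ y in Q, ‖f y‖ₑ ∂μ := by
  have measure_eq : μ B = ‖μ.real B‖ₑ := by
    rw [Real.enorm_of_nonneg measureReal_nonneg, ofReal_measureReal hB]
  have real_ne : μ.real B ≠ 0 := (measureReal_ne_zero_iff hB).2 hB0
  rw [measure_eq, ← enorm_mul, pieceMean, div_mul_cancel₀ _ real_ne]
  exact enorm_integral_le_lintegral_enorm _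

lemma integrable_badPiece (hf : Integrable f μ) (hQm : MeasurableSet Q) (hBm : MeasurableSet B)
    (hB : μ B ≠ ∞) : Integrable (badPiece μ f Q B) μ :=
  (hf.indicator hQm).sub ((integrable_indicator_iff hBm).2 (integrableOn_const hB))

lemma integral_badPiece (hf : Integrable f μ) (hQm : MeasurableSet Q) (hBm : MeasurableSet B)
    (hB0 : μ B ≠ 0) (hB : μ B ≠ ∞) : ∫ y, badPiece μ f Q B y ∂μ = 0 := by
  have real_ne : μ.real B ≠ 0 := (measureReal_ne_zero_iff hB).2 hB0
  simp only [badPiece]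
  rw [integral_sub (hf.indicator hQm) ((integrable_indicator_iff hBm).2 (integrableOn_const hB)),
    integral_indicator hQm, integral_indicator hBm, setIntegral_const, pieceMean, smul_eq_mul,
    mul_div_cancel₀ _ real_ne, sub_self]

lemma lintegral_enorm_badPiece_le (hQm : MeasurableSet Q) (hBm : MeasurableSet B)
    (hB0 : μ B ≠ 0) (hB : μ B ≠ ∞) :
    ∫⁻ y, ‖badPiece μ f Q B y‖ₑ ∂μ ≤ 2 * ∫⁻ y in Q, ‖f y‖ₑ ∂μ := by
  calc ∫⁻ y, ‖badPiece μ f Q B y‖ₑ ∂μ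
      ≤ ∫⁻ y, Q.indicator (fun y => ‖f y‖ₑ) y +
          B.indicator (fun _ => ‖pieceMean μ f Q B‖ₑ) y ∂μ :=
        lintegral_mono fun y => enorm_sub_le.trans_eq <| by
          rw [enorm_indicator_eq_indicator_enorm, enorm_indicator_eq_indicator_enorm]
    _ = ∫⁻ y in Q, ‖f y‖ₑ ∂μ + ‖pieceMean μ f Q B‖ₑ * μ B := by
        rw [lintegral_add_right _ (measurable_const.indicator hBm), lintegral_indicator hQm,
          lintegral_indicator hBm, setLIntegral_const]
    _ ≤ 2 * ∫⁻ y in Q, ‖f y‖ₑ ∂μ := by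
        rw [two_mul]
        gcongr
        exact enorm_pieceMean_mul_measure_le hB0 hB

lemma badPiece_eq_zero {y : α} (hQ : y ∉ Q) (hB : y ∉ B) : badPiece μ f Q B y = 0 := by
  rw [badPiece, indicator_of_notMem hQ, indicator_of_notMem hB, sub_zero]

variable {ι : Type*} {Q B : ι → Set α}

/-- What is left of `f` after subtracting all pieces `badPiece μ f (Q j) (B j)`. -/
def goodPart (μ : Measure α) (f : α → ℝ) (Q B : ι → Set α) (y : α) : ℝ :=
  (⋃ j, Q j)ᶜ.indicator f y + ∑' j, (B j).indicator (fun _ => pieceMean μ f (Q j) (B j)) y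

lemma hasSum_badPiece (hQ : Pairwise (Function.onFun Disjoint Q))
    (hB : Pairwise (Function.onFun Disjoint B)) (y : α) :
    HasSum (fun j => badPiece μ f (Q j) (B j) y) (f y - goodPart μ f Q B y) := by
  have split : f y - goodPart μ f Q B y = (⋃ j, Q j).indicator f y -
      ∑' j, (B j).indicator (fun _ => pieceMean μ f (Q j) (B j)) y := by
    rw [goodPart, ← sub_sub, sub_left_inj, sub_eq_iff_eq_add,
      indicator_self_add_compl_apply]
  rw [split]
  exact (hasSum_indicator_iUnion f hQ y).sub
    (summable_indicator_of_pairwise_disjoint _ hB y).hasSum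

lemma measurable_goodPart [Countable ι] (hf : Measurable f) (hQ : ∀ j, MeasurableSet (Q j))
    (hB : ∀ j, MeasurableSet (B j)) : Measurable (goodPart μ f Q B) :=
  (hf.indicator (MeasurableSet.iUnion hQ).compl).add
    (Measurable.tsum fun j => measurable_const.indicator (hB j))

lemma lintegral_enorm_goodPart_le [Countable ι] (hf : Measurable f)
    (hQ : ∀ j, MeasurableSet (Q j)) (hQd : Pairwise (Function.onFun Disjoint Q))
    (hB : ∀ j, MeasurableSet (B j)) (hB0 : ∀ j, μ (B j) ≠ 0) (hB' : ∀ j, μ (B j) ≠ ∞) :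
    ∫⁻ y, ‖goodPart μ f Q B y‖ₑ ∂μ ≤ ∫⁻ y, ‖f y‖ₑ ∂μ := by
  have hΩ : MeasurableSet (⋃ j, Q j) := MeasurableSet.iUnion hQ
  calc ∫⁻ y, ‖goodPart μ f Q B y‖ₑ ∂μ
      ≤ ∫⁻ y, (⋃ j, Q j)ᶜ.indicator (fun y => ‖f y‖ₑ) y +
          ∑' j, (B j).indicator (fun _ => ‖pieceMean μ f (Q j) (B j)‖ₑ) y ∂μ := by
        refine lintegral_mono fun y => (enorm_add_le _ _).trans ?_
        simp only [← enorm_indicator_eq_indicator_enorm]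
        gcongr
        exact enorm_tsum_le_tsum_enorm
    _ = ∫⁻ y in (⋃ j, Q j)ᶜ, ‖f y‖ₑ ∂μ + ∑' j, ‖pieceMean μ f (Q j) (B j)‖ₑ * μ (B j) := by
        rw [lintegral_add_left (hf.enorm.indicator hΩ.compl), lintegral_indicator hΩ.compl,
          lintegral_tsum fun j => (measurable_const.indicator (hB j)).aemeasurable]
        simp only [lintegral_indicator (hB _), setLIntegral_const]
    _ ≤ ∫⁻ y in (⋃ j, Q j)ᶜ, ‖f y‖ₑ ∂μ + ∑' j, ∫⁻ y in Q j, ‖f y‖ₑ ∂μ := by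
        gcongr with j
        exact enorm_pieceMean_mul_measure_le (hB0 j) (hB' j)
    _ = ∫⁻ y, ‖f y‖ₑ ∂μ := by
        rw [← lintegral_iUnion hQ hQd, add_comm, lintegral_add_compl _ hΩ]

lemma enorm_goodPart_le (hB : Pairwise (Function.onFun Disjoint B))
    (hBQ : ⋃ j, B j ⊆ ⋃ j, Q j) {M : ℝ≥0∞} (hM : ∀ j, ‖pieceMean μ f (Q j) (B j)‖ₑ ≤ M) {y : α}
    (hy : y ∉ ⋃ j, Q j → ‖f y‖ₑ ≤ M) : ‖goodPart μ f Q B y‖ₑ ≤ M := by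
  by_cases hyQ : y ∈ ⋃ j, Q j
  · rw [goodPart, indicator_of_notMem (not_not_intro hyQ), zero_add]
    exact enorm_tsum_indicator_le hB (fun j _ => hM j) y
  · have outside := hasSum_indicator_of_notMem_iUnion
      (fun j _ => pieceMean μ f (Q j) (B j)) (fun hyB => hyQ (hBQ hyB))
    rw [goodPart, indicator_of_mem hyQ, outside.tsum_eq, add_zero]
    exact hy hyQ

end Pieces

variable {E : Type*} [NormedAddCommGroup E] [NormedSpace ℝ E] [MeasurableSpace E]

/-- A Calderón–Zygmund decomposition `f = g + ∑ j, b j` at height `t`: the good function `g` is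
bounded by a multiple of `t`, and the bad functions `b j` have mean zero and are supported in the
balls `closedBall (c j) (5 * r j)`, where the balls `closedBall (c j) (r j)` are disjoint. -/
structure IsCZDecomposition {ι : Type*} (μ : Measure E) (f : E → ℝ) (t : ℝ≥0∞) (c : ι → E)
    (r : ι → ℝ) (g : E → ℝ) (b : ι → E → ℝ) : Prop where
  countable : Countable ι
  radius_pos : ∀ j, 0 < r j
  disjoint : Pairwise (Function.onFun Disjoint fun j => closedBall (c j) (r j))
  mul_tsum_measure_le : t * ∑' j, μ (closedBall (c j) (r j)) ≤ ∫⁻ y, ‖f y‖ₑ ∂μ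
  integrable_bad : ∀ j, Integrable (b j) μ
  bad_eq_zero : ∀ j, ∀ y ∉ closedBall (c j) (5 * r j), b j y = 0
  integral_bad : ∀ j, ∫ y, b j y ∂μ = 0
  hasSum_bad : ∀ y, HasSum (fun j => b j y) (f y - g y)
  lintegral_bad_le : ∀ j,
    ∫⁻ y, ‖b j y‖ₑ ∂μ ≤ 2 * 5 ^ finrank ℝ E * t * μ (closedBall (c j) (r j))
  tsum_lintegral_bad_le : ∑' j, ∫⁻ y, ‖b j y‖ₑ ∂μ ≤ 2 * ∫⁻ y, ‖f y‖ₑ ∂μ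
  measurable_good : Measurable g
  good_ae_le : ∀ᵐ y ∂μ, ‖g y‖ₑ ≤ 5 ^ finrank ℝ E * t
  lintegral_good_le : ∫⁻ y, ‖g y‖ₑ ∂μ ≤ ∫⁻ y, ‖f y‖ₑ ∂μ

variable [BorelSpace E] [FiniteDimensional ℝ E] {μ : Measure E} [μ.IsAddHaarMeasure]

lemma IsStoppingFamily.enorm_pieceMean_le {ι : Type*} {f : E → ℝ} {t : ℝ≥0∞} {c : ι → E}
    {r : ι → ℝ} (H : IsStoppingFamily μ (fun y => ‖f y‖ₑ) t c r) {j : ι} {Q : Set E}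
    (hQ : Q ⊆ closedBall (c j) (5 * r j)) :
    ‖pieceMean μ f Q (closedBall (c j) (r j))‖ₑ ≤ 5 ^ finrank ℝ E * t := by
  have hB0 : μ (closedBall (c j) (r j)) ≠ 0 := (measure_closedBall_pos μ _ (H.radius_pos j)).ne'
  have hB : μ (closedBall (c j) (r j)) ≠ ∞ := measure_closedBall_lt_top.ne
  exact (ENNReal.mul_le_mul_iff_left hB0 hB).1
    ((enorm_pieceMean_mul_measure_le hB0 hB).trans (H.setLIntegral_le_mul_measure hQ))

lemma IsStoppingFamily.isCZDecomposition {ι : Type*} {f : E → ℝ} (hfm : Measurable f)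
    (hf : Integrable f μ) {t : ℝ≥0∞} {c : ι → E} {r : ι → ℝ}
    (H : IsStoppingFamily μ (fun y => ‖f y‖ₑ) t c r) {Q : ι → Set E}
    (hQm : ∀ j, MeasurableSet (Q j)) (hQd : Pairwise (Function.onFun Disjoint Q))
    (hQ : ∀ j, Q j ⊆ closedBall (c j) (5 * r j))
    (hQU : ⋃ j, Q j = ⋃ j, closedBall (c j) (5 * r j)) :
    IsCZDecomposition μ f t c r (goodPart μ f Q fun j => closedBall (c j) (r j))
      fun j => badPiece μ f (Q j) (closedBall (c j) (r j)) := by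
  have hcount := H.countable
  have hB0 (j : ι) : μ (closedBall (c j) (r j)) ≠ 0 :=
    (measure_closedBall_pos μ _ (H.radius_pos j)).ne'
  have hB (j : ι) : μ (closedBall (c j) (r j)) ≠ ∞ := measure_closedBall_lt_top.ne
  have ball_subset (j : ι) : closedBall (c j) (r j) ⊆ closedBall (c j) (5 * r j) :=
    closedBall_subset_closedBall (by linarith [H.radius_pos j])
  have bad_le (j : ι) := lintegral_enorm_badPiece_le (f := f) (hQm j) measurableSet_closedBall
    (hB0 j) (hB j)
  exact
  { countable := hcount
    radius_pos := H.radius_pos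
    disjoint := H.disjoint
    mul_tsum_measure_le := H.mul_tsum_measure_le
    integrable_bad j := integrable_badPiece hf (hQm j) measurableSet_closedBall (hB j)
    bad_eq_zero j y hy := badPiece_eq_zero (fun h => hy (hQ j h)) fun h => hy (ball_subset j h)
    integral_bad j := integral_badPiece hf (hQm j) measurableSet_closedBall (hB0 j) (hB j)
    hasSum_bad := hasSum_badPiece hQd H.disjoint
    lintegral_bad_le j := by
      simpa only [mul_assoc] using
        (bad_le j).trans (mul_le_mul_right (H.setLIntegral_le_mul_measure (hQ j)) 2)
    tsum_lintegral_bad_le := by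
      refine (ENNReal.tsum_le_tsum bad_le).trans ?_
      rw [ENNReal.tsum_mul_left, ← lintegral_iUnion hQm hQd]
      gcongr
      exact Measure.restrict_le_self
    measurable_good := measurable_goodPart hfm hQm fun _ => measurableSet_closedBall
    good_ae_le := by
      filter_upwards [H.ae_le] with y hy
      refine enorm_goodPart_le H.disjoint (hQU ▸ iUnion_mono ball_subset)
        (fun j => H.enorm_pieceMean_le (hQ j)) fun hyQ => ?_
      exact (hy (hQU ▸ hyQ)).trans (le_mul_of_one_le_left' (one_le_pow₀ (by norm_num)))
    lintegral_good_le := lintegral_enorm_goodPart_le hfm hQm hQd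
      (fun _ => measurableSet_closedBall) hB0 hB }

lemma exists_isCZDecomposition [Nontrivial E] {f : E → ℝ} (hfm : Measurable f)
    (hf : Integrable f μ) {t : ℝ≥0∞} (ht : t ≠ 0) :
    ∃ (u : Set E) (r : u → ℝ) (g : E → ℝ) (b : u → E → ℝ),
      IsCZDecomposition μ f t (fun c : u => (c : E)) r g b := by
  obtain ⟨u, r, H⟩ := exists_isStoppingFamily hfm.enorm hf.2.ne ht
  have := H.countable
  obtain ⟨Q, hQm, hQd, hQ, hQU⟩ := exists_measurable_pairwise_disjoint_subset
    (D := fun c : u => closedBall (c : E) (5 * r c)) fun _ => measurableSet_closedBall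
  exact ⟨u, r, _, _, H.isCZDecomposition hfm hf hQm hQd hQ hQU⟩

end CalderonZygmundDecomposition

section Variation

/-- The strictly decreasing sequences of positive reals tending to `0`. -/
def vanishingSequences : Set (ℕ → ℝ) :=
  {ε | StrictAnti ε ∧ (∀ i, 0 < ε i) ∧ Tendsto ε atTop (nhds 0)}

/-- The `ℓ^ρ` norm of the increments of `φ` along the sequence `ε`. -/
def variationAlong (ρ : ℝ) (ε : ℕ → ℝ) (φ : ℝ → ℝ) : ℝ≥0∞ :=
  (∑' i, ENNReal.ofReal |φ (ε (i + 1)) - φ (ε i)| ^ ρ) ^ (1 / ρ)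

/-- The `ρ`-variation of a function on `(0, ∞)`, over sequences decreasing to `0`. -/
def variationAtZero (ρ : ℝ) (φ : ℝ → ℝ) : ℝ≥0∞ :=
  ⨆ ε ∈ vanishingSequences, variationAlong ρ ε φ

lemma lowerSemicontinuous_variationAlong {ρ : ℝ} (hρ : 0 ≤ ρ) {φ : ℝ → ℝ}
    (hφ : ContinuousOn φ (Ioi 0)) :
    LowerSemicontinuous fun ε : vanishingSequences => variationAlong ρ ε φ := by
  have eval_continuous (i : ℕ) : Continuous fun ε : vanishingSequences => φ (ε.1 i) :=
    hφ.comp_continuous ((continuous_apply i).comp continuous_subtype_val) fun ε => ε.2.2.1 i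
  refine ENNReal.continuous_rpow_const.comp_lowerSemicontinuous
    (lowerSemicontinuous_tsum fun i => ?_) (ENNReal.monotone_rpow_of_nonneg (by positivity))
  exact (ENNReal.continuous_rpow_const.comp (ENNReal.continuous_ofReal.comp
    ((eval_continuous (i + 1)).sub (eval_continuous i)).abs)).lowerSemicontinuous

lemma iSup_eq_biSup_of_dense_of_lowerSemicontinuous {X : Type*} [TopologicalSpace X]
    {F : X → ℝ≥0∞} (hF : LowerSemicontinuous F) {D : Set X} (hD : Dense D) :
    ⨆ x, F x = ⨆ x ∈ D, F x := by
  refine le_antisymm (iSup_le fun x => ?_) (iSup₂_le fun x _ => le_iSup F x)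
  have closed : IsClosed {x | F x ≤ ⨆ x ∈ D, F x} := hF.isClosed_preimage _
  exact closed.closure_subset_iff.2 (fun y hy => le_iSup₂ (f := fun y _ => F y) y hy) (hD x)

/- By continuity a countable dense set of sequences suffices. -/
lemma measurable_variationAtZero {α : Type*} [MeasurableSpace α] {ρ : ℝ} (hρ : 0 ≤ ρ)
    {φ : α → ℝ → ℝ} (hφ : ∀ x, ContinuousOn (φ x) (Ioi 0))
    (hmeas : ∀ ε, Measurable fun x => φ x ε) : Measurable fun x => variationAtZero ρ (φ x) := by
  obtain ⟨D, hDc, hD⟩ := TopologicalSpace.exists_countable_dense vanishingSequences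
  have countable_sup (x : α) :
      variationAtZero ρ (φ x) = ⨆ ε ∈ D, variationAlong ρ ε.1 (φ x) := by
    rw [variationAtZero, iSup_subtype',
      iSup_eq_biSup_of_dense_of_lowerSemicontinuous
        (lowerSemicontinuous_variationAlong hρ (hφ x)) hD]
  simp_rw [countable_sup]
  refine Measurable.biSup D hDc fun ε _ => (Measurable.tsum fun i => ?_).pow_const _
  exact (((hmeas _).sub (hmeas _)).abs.ennreal_ofReal).pow_const _

end Variation

section Annulus

variable {α : Type*} [PseudoMetricSpace α]

/-- The annulus `a < |x - y| ≤ b` around `x`. -/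
def annulus (x : α) (a b : ℝ) : Set α := {y | a < dist x y ∧ dist x y ≤ b}

variable [MeasurableSpace α] [OpensMeasurableSpace α]

lemma measurableSet_lt_dist (x : α) (a : ℝ) : MeasurableSet {y | a < dist x y} :=
  (isOpen_lt continuous_const (continuous_const.dist continuous_id)).measurableSet

lemma measurableSet_annulus (x : α) (a b : ℝ) : MeasurableSet (annulus x a b) :=
  (measurableSet_lt_dist x a).inter
    (isClosed_le (continuous_const.dist continuous_id) continuous_const).measurableSet

lemma tsum_setLIntegral_annulus_le (μ : Measure α) (x : α) {ε : ℕ → ℝ} (hε : Antitone ε)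
    (h : α → ℝ≥0∞) : ∑' i, ∫⁻ y in annulus x (ε (i + 1)) (ε i), h y ∂μ ≤ ∫⁻ y, h y ∂μ := by
  have disjoint : Pairwise (Function.onFun Disjoint fun i => annulus x (ε (i + 1)) (ε i)) := by
    refine (pairwise_disjoint_on _).2 fun i j hij => disjoint_left.2 fun y hi hj => ?_
    exact (hj.2.trans (hε hij)).not_gt hi.1
  rw [← lintegral_iUnion (fun i => measurableSet_annulus x _ _) disjoint]
  exact setLIntegral_le_lintegral _ _

end Annulus

section TruncatedIntegral

open Module

variable {E : Type*} [NormedAddCommGroup E] [MeasurableSpace E]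

/-- The truncated singular integral `∫_{|x - y| > ε} K(x, y) f(y) dμ(y)`. -/
def truncatedIntegral (μ : Measure E) (K : E → E → ℝ) (ε : ℝ) (f : E → ℝ) (x : E) : ℝ :=
  ∫ y in {y | ε < dist x y}, K x y * f y ∂μ

/-- The variation `V_ρ(T_* f)` of the truncations of the singular integral with kernel `K`. -/
def truncVariation (μ : Measure E) (K : E → E → ℝ) (ρ : ℝ) (f : E → ℝ) (x : E) : ℝ≥0∞ :=
  variationAtZero ρ fun ε => truncatedIntegral μ K ε f x

/-- A measurable kernel of size `A |x - y|^{-d}` whose modulus of continuity `ω` in the second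
variable satisfies the Dini condition. -/
structure IsDiniKernel [NormedSpace ℝ E] (K : E → E → ℝ) (A : ℝ) (ω : ℝ → ℝ) : Prop where
  measurable : Measurable (Function.uncurry K)
  const_nonneg : 0 ≤ A
  size : ∀ x y, x ≠ y → |K x y| ≤ A / dist x y ^ finrank ℝ E
  smooth : ∀ x y y', x ≠ y → dist y y' ≤ dist x y / 2 →
    |K x y - K x y'| ≤ A * ω (dist y y' / dist x y) / dist x y ^ finrank ℝ E
  monotoneOn : MonotoneOn ω (Ici 0)
  dini : ∫⁻ t in Ioo (0 : ℝ) 1, ENNReal.ofReal (ω t / t) ≠ ∞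

namespace IsDiniKernel

variable [NormedSpace ℝ E] {K : E → E → ℝ} {A : ℝ} {ω : ℝ → ℝ} {f : E → ℝ}

lemma measurable_right (hK : IsDiniKernel K A ω) (x : E) : Measurable (K x) :=
  hK.measurable.comp measurable_prodMk_left

lemma abs_le_of_le_dist (hK : IsDiniKernel K A ω) {x y : E} {ε : ℝ} (hε : 0 < ε)
    (h : ε ≤ dist x y) : |K x y| ≤ A / ε ^ finrank ℝ E := by
  have hA := hK.const_nonneg
  refine (hK.size x y (dist_pos.1 (hε.trans_le h))).trans ?_
  gcongr

variable [BorelSpace E] {μ : Measure E}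

lemma integrableOn_mul (hK : IsDiniKernel K A ω) (hf : Integrable f μ) (x : E) {ε : ℝ}
    (hε : 0 < ε) : IntegrableOn (fun y => K x y * f y) {y | ε < dist x y} μ := by
  refine Integrable.bdd_mul hf.integrableOn (hK.measurable_right x).aestronglyMeasurable
    (c := A / ε ^ finrank ℝ E) ?_
  exact (ae_restrict_iff' (measurableSet_lt_dist x ε)).2 <|
    .of_forall fun y hy => hK.abs_le_of_le_dist hε (le_of_lt hy)

lemma truncatedIntegral_sub (hK : IsDiniKernel K A ω) (hf : Integrable f μ) (x : E) {a b : ℝ}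
    (ha : 0 < a) (hab : a ≤ b) :
    truncatedIntegral μ K a f x - truncatedIntegral μ K b f x =
      ∫ y in annulus x a b, K x y * f y ∂μ := by
  rw [truncatedIntegral, truncatedIntegral, ← setIntegral_sdiff (measurableSet_lt_dist x b)
    (hK.integrableOn_mul hf x ha) fun y hy => hab.trans_lt hy]
  congr 2
  ext y
  simp [annulus]

variable [FiniteDimensional ℝ E] [μ.IsAddHaarMeasure]

lemma continuousOn_truncatedIntegral [Nontrivial E] (hK : IsDiniKernel K A ω)
    (hf : Integrable f μ) (x : E) :
    ContinuousOn (fun ε => truncatedIntegral μ K ε f x) (Ioi 0) := by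
  intro ε (hε : 0 < ε)
  refine ContinuousAt.continuousWithinAt ?_
  simp_rw [truncatedIntegral, ← integral_indicator (measurableSet_lt_dist x _)]
  refine continuousAt_of_dominated
    (bound := {y | ε / 2 < dist x y}.indicator fun y => ‖K x y * f y‖) ?_ ?_ ?_ ?_
  · exact .of_forall fun a => ((hK.measurable_right x).aestronglyMeasurable.mul
      hf.aestronglyMeasurable).indicator (measurableSet_lt_dist x a)
  · filter_upwards [lt_mem_nhds (half_lt_self hε)] with a ha
    refine .of_forall fun y => ?_
    rw [norm_indicator_eq_indicator_norm]
    exact indicator_le_indicator_of_subset (fun y hy => lt_trans ha hy) (fun _ => norm_nonneg _) y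
  · exact (integrable_indicator_iff (measurableSet_lt_dist x _)).2
      (hK.integrableOn_mul hf x (half_pos hε)).norm
  · filter_upwards [measure_eq_zero_iff_ae_notMem.1 (Measure.addHaar_sphere μ x ε)] with y hy
    rcases lt_or_gt_of_ne (mt Metric.mem_sphere'.2 hy) with h | h
    · refine (continuousAt_const (y := (0 : ℝ))).congr ?_
      filter_upwards [lt_mem_nhds h] with a ha
      rw [indicator_of_notMem]
      simp [ha.le]
    · refine (continuousAt_const (y := K x y * f y)).congr ?_
      filter_upwards [gt_mem_nhds h] with a ha
      rw [indicator_of_mem]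
      exact ha

lemma measurable_truncatedIntegral (hK : IsDiniKernel K A ω) (hf : Measurable f) (ε : ℝ) :
    Measurable fun x => truncatedIntegral μ K ε f x := by
  simp_rw [truncatedIntegral, ← integral_indicator (measurableSet_lt_dist _ ε)]
  refine (StronglyMeasurable.integral_prod_right (Measurable.stronglyMeasurable ?_)).measurable
  exact (hK.measurable.mul (hf.comp measurable_snd)).indicator
    (measurableSet_lt measurable_const (measurable_fst.dist measurable_snd))

lemma measurable_truncVariation [Nontrivial E] (hK : IsDiniKernel K A ω) {ρ : ℝ} (hρ : 0 ≤ ρ)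
    (hfm : Measurable f) (hf : Integrable f μ) : Measurable (truncVariation μ K ρ f) :=
  measurable_variationAtZero hρ (hK.continuousOn_truncatedIntegral hf)
    (hK.measurable_truncatedIntegral hfm)

end IsDiniKernel

end TruncatedIntegral

section BadPart

open Metric Module

lemma enorm_setIntegral_mul_le {α : Type*} [MeasurableSpace α] {μ : Measure α} {s : Set α}
    (hs : MeasurableSet s) {k b : α → ℝ} {a : ℝ} (h : ∀ y ∈ s, b y ≠ 0 → |k y| ≤ a) :
    ‖∫ y in s, k y * b y ∂μ‖ₑ ≤ ENNReal.ofReal a * ∫⁻ y in s, ‖b y‖ₑ ∂μ := by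
  refine (enorm_integral_le_lintegral_enorm _).trans ?_
  rw [← lintegral_const_mul' _ _ ENNReal.ofReal_ne_top]
  refine setLIntegral_mono' hs fun y hy => ?_
  rw [enorm_mul]
  by_cases hb : b y = 0
  · simp [hb]
  · gcongr
    rw [Real.enorm_eq_ofReal_abs]
    exact ENNReal.ofReal_le_ofReal (h y hy hb)

lemma closedBall_subset_annulus_or_disjoint {α : Type*} [PseudoMetricSpace α] {x c : α}
    {l a b : ℝ} (ha : l < |dist x c - a|) (hb : l < |dist x c - b|) :
    closedBall c l ⊆ annulus x a b ∨ Disjoint (closedBall c l) (annulus x a b) := by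
  by_cases hc : a < dist x c ∧ dist x c ≤ b
  · refine .inl fun y hy => ?_
    have hy := abs_le.1 (abs_dist_sub_dist_le_of_mem_closedBall x hy)
    rw [abs_of_pos (by linarith)] at ha
    rw [abs_of_nonpos (by linarith)] at hb
    constructor <;> linarith
  · refine .inr (disjoint_left.2 fun y hy hya => hc ?_)
    have hy := abs_le.1 (abs_dist_sub_dist_le_of_mem_closedBall x hy)
    obtain ⟨hay, hyb⟩ := hya
    constructor
    · by_contra! h
      rw [abs_of_nonpos (by linarith)] at ha
      linarith
    · by_contra! h
      rw [abs_of_pos (by linarith)] at hb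
      linarith

variable {E : Type*} [NormedAddCommGroup E] [NormedSpace ℝ E] [MeasurableSpace E] {μ : Measure E}
  {K : E → E → ℝ} {A : ℝ} {ω : ℝ → ℝ}

namespace IsDiniKernel

variable {c x : E} {l : ℝ} {b : E → ℝ}

lemma enorm_setIntegral_mul_le_tailWeight_one (hK : IsDiniKernel K A ω) (hl : 0 < l)
    (hb : ∀ y ∉ closedBall c l, b y = 0) (hx : 2 * l ≤ dist x c) {s : Set E}
    (hs : MeasurableSet s) :
    ‖∫ y in s, K x y * b y ∂μ‖ₑ ≤ 2 ^ finrank ℝ E * ENNReal.ofReal A *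
      tailWeight (fun _ => 1) l (x - c) * ∫⁻ y in s, ‖b y‖ₑ ∂μ := by
  have hA := hK.const_nonneg
  have hxc : 0 < dist x c := by linarith
  have const_eq : 2 ^ finrank ℝ E * ENNReal.ofReal A * tailWeight (fun _ => 1) l (x - c) =
      ENNReal.ofReal (A / (dist x c / 2) ^ finrank ℝ E) := by
    rw [tailWeight, ← dist_eq_norm, ← ENNReal.ofReal_ofNat, ← ENNReal.ofReal_pow zero_le_two,
      ← ENNReal.ofReal_mul (by positivity), ← ENNReal.ofReal_mul (by positivity), div_pow]
    congr 1
    field_simp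
  rw [const_eq]
  refine enorm_setIntegral_mul_le hs fun y _ hy => ?_
  have hyl := (abs_le.1 (abs_dist_sub_dist_le_of_mem_closedBall x (not_imp_comm.1 (hb y) hy))).1
  exact hK.abs_le_of_le_dist (half_pos hxc) (by linarith)

lemma abs_sub_le_of_mem_closedBall (hK : IsDiniKernel K A ω) (hl : 0 < l)
    (hx : 2 * l ≤ dist x c) {y : E} (hy : y ∈ closedBall c l) :
    |K x y - K x c| ≤ A * (ω (l / dist x c) / dist x c ^ finrank ℝ E) := by
  have hA := hK.const_nonneg
  have hxc : 0 < dist x c := by linarith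
  have hyc : dist c y ≤ l := mem_closedBall'.1 hy
  have ω_le : ω (dist c y / dist x c) ≤ ω (l / dist x c) :=
    hK.monotoneOn (mem_Ici.2 (by positivity)) (mem_Ici.2 (by positivity)) (by gcongr)
  rw [abs_sub_comm, ← mul_div_assoc]
  refine (hK.smooth x c y (dist_pos.1 hxc) (by linarith)).trans ?_
  gcongr

variable [BorelSpace E]

lemma enorm_setIntegral_annulus_le_of_closedBall_subset (hK : IsDiniKernel K A ω) (hl : 0 < l)
    (hbi : Integrable b μ) (hb : ∀ y ∉ closedBall c l, b y = 0) (hb0 : ∫ y, b y ∂μ = 0)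
    (hx : 2 * l ≤ dist x c) {a a' : ℝ} (ha : 0 < a) (hsub : closedBall c l ⊆ annulus x a a') :
    ‖∫ y in annulus x a a', K x y * b y ∂μ‖ₑ ≤
      ENNReal.ofReal A * tailWeight ω l (x - c) * ∫⁻ y in annulus x a a', ‖b y‖ₑ ∂μ := by
  have mean_zero : ∫ y in annulus x a a', b y ∂μ = 0 := by
    rw [setIntegral_eq_integral_of_forall_compl_eq_zero fun y hy => hb y (mt (@hsub y) hy), hb0]
  have subtract_center : ∫ y in annulus x a a', K x y * b y ∂μ =
      ∫ y in annulus x a a', (K x y - K x c) * b y ∂μ := by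
    simp_rw [sub_mul]
    rw [integral_sub ((hK.integrableOn_mul hbi x ha).mono_set fun y hy => hy.1)
      (hbi.integrableOn.const_mul _), integral_const_mul, mean_zero, mul_zero, sub_zero]
  rw [subtract_center, tailWeight, ← ENNReal.ofReal_mul hK.const_nonneg, ← dist_eq_norm]
  exact enorm_setIntegral_mul_le (measurableSet_annulus x a a') fun y _ hy =>
    hK.abs_sub_le_of_mem_closedBall hl hx (not_imp_comm.1 (hb y) hy)

lemma enorm_setIntegral_annulus_le_of_lt_abs (hK : IsDiniKernel K A ω) (hl : 0 < l)
    (hbi : Integrable b μ) (hb : ∀ y ∉ closedBall c l, b y = 0) (hb0 : ∫ y, b y ∂μ = 0)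
    (hx : 2 * l ≤ dist x c) {a a' : ℝ} (ha : 0 < a) (hla : l < |dist x c - a|)
    (hla' : l < |dist x c - a'|) :
    ‖∫ y in annulus x a a', K x y * b y ∂μ‖ₑ ≤
      ENNReal.ofReal A * tailWeight ω l (x - c) * ∫⁻ y in annulus x a a', ‖b y‖ₑ ∂μ := by
  rcases closedBall_subset_annulus_or_disjoint hla hla' with hsub | hdisj
  · exact hK.enorm_setIntegral_annulus_le_of_closedBall_subset hl hbi hb hb0 hx ha hsub
  · have integrand_zero : EqOn (fun y => K x y * b y) 0 (annulus x a a') := fun y hy => by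
      simp [hb y (disjoint_right.1 hdisj hy)]
    simp [setIntegral_congr_fun (measurableSet_annulus x a a') integrand_zero]

lemma setLIntegral_annulus_enorm_mul_le (hK : IsDiniKernel K A ω) (b : E → ℝ) {a a' : ℝ}
    (ha : 0 < a) : ∫⁻ y in annulus x a a', ‖K x y * b y‖ₑ ∂μ ≤
      ENNReal.ofReal (A / a ^ finrank ℝ E) * ∫⁻ y, ‖b y‖ₑ ∂μ := by
  rw [← lintegral_const_mul' _ _ ENNReal.ofReal_ne_top]
  refine le_trans (setLIntegral_mono' (measurableSet_annulus x a a') fun y hy => ?_)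
    (setLIntegral_le_lintegral _ _)
  rw [enorm_mul, Real.enorm_eq_ofReal_abs (K x y)]
  gcongr
  exact hK.abs_le_of_le_dist ha hy.1.le

lemma setIntegral_annulus_eq_add_tsum (hK : IsDiniKernel K A ω) {ι : Type*} [Countable ι]
    {f g : E → ℝ} {b : ι → E → ℝ} (hf : Integrable f μ) (hg : Integrable g μ)
    (hb : ∀ j, Integrable (b j) μ) (hsum : ∀ y, HasSum (fun j => b j y) (f y - g y))
    (hfin : ∑' j, ∫⁻ y, ‖b j y‖ₑ ∂μ ≠ ∞) {a a' : ℝ} (ha : 0 < a) :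
    ∫ y in annulus x a a', K x y * f y ∂μ = ∫ y in annulus x a a', K x y * g y ∂μ +
      ∑' j, ∫ y in annulus x a a', K x y * b j y ∂μ := by
  have integrable {h : E → ℝ} (hh : Integrable h μ) :
      IntegrableOn (fun y => K x y * h y) (annulus x a a') μ :=
    (hK.integrableOn_mul hh x ha).mono_set fun y hy => hy.1
  rw [← integral_tsum fun j => (integrable (hb j)).aestronglyMeasurable]
  · rw [← sub_eq_iff_eq_add', ← integral_sub (integrable hf) (integrable hg)]
    simp_rw [tsum_mul_left, (hsum _).tsum_eq, mul_sub]
  · refine ne_top_of_le_ne_top ?_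
      (ENNReal.tsum_le_tsum fun j => hK.setLIntegral_annulus_enorm_mul_le (b j) ha)
    rw [ENNReal.tsum_mul_left]
    exact ENNReal.mul_ne_top ENNReal.ofReal_ne_top hfin

end IsDiniKernel

end BadPart

section Pointwise

open Metric Module

variable {E : Type*} [NormedAddCommGroup E] {ι : Type*}

/-- The tenfold dilation of the balls `closedBall (c j) (r j)`, off which the bad part is only
seen through its tails. -/
def exceptionalSet (c : ι → E) (r : ι → ℝ) : Set E := ⋃ j, closedBall (c j) (10 * r j)

lemma two_mul_le_dist_of_notMem_exceptionalSet {c : ι → E} {r : ι → ℝ} {x : E}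
    (hx : x ∉ exceptionalSet c r) (j : ι) : 2 * (5 * r j) ≤ dist x (c j) := by
  have hj : x ∉ closedBall (c j) (10 * r j) := fun h => hx (mem_iUnion.2 ⟨j, h⟩)
  linarith [not_le.1 (mt mem_closedBall.2 hj)]

/-- The indices of the balls `closedBall (c j) (5 * r j)` met by the sphere of radius `ε`
around `x`. -/
def crossingIndices (c : ι → E) (r : ι → ℝ) (x : E) (ε : ℝ) : Set ι :=
  {j | |dist x (c j) - ε| ≤ 5 * r j}

variable [NormedSpace ℝ E] [MeasurableSpace E]

/-- The superposition of the tails of the bad pieces `b j`, weighted by their masses. -/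
def badTail (μ : Measure E) (φ : ℝ → ℝ) (c : ι → E) (r : ι → ℝ) (b : ι → E → ℝ) (x : E) : ℝ≥0∞ :=
  ∑' j, tailWeight φ (5 * r j) (x - c j) * ∫⁻ y, ‖b j y‖ₑ ∂μ

/-- Majorant, by cancellation, of the contribution to the annulus `a < |x - y| ≤ a'` of the bad
pieces supported inside it. -/
def interiorBound (μ : Measure E) (A : ℝ) (ω : ℝ → ℝ) (c : ι → E) (r : ι → ℝ) (b : ι → E → ℝ)
    (x : E) (a a' : ℝ) : ℝ≥0∞ :=
  ∑' j, ENNReal.ofReal A * tailWeight ω (5 * r j) (x - c j) *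
    ∫⁻ y in annulus x a a', ‖b j y‖ₑ ∂μ

/-- Majorant, by size alone, of the contribution to the annulus `a < |x - y| ≤ a'` of the bad
pieces cut by one of its boundary spheres. -/
def crossingBound (μ : Measure E) (A : ℝ) (c : ι → E) (r : ι → ℝ) (b : ι → E → ℝ)
    (x : E) (a a' : ℝ) : ℝ≥0∞ :=
  ∑' j, (crossingIndices c r x a ∪ crossingIndices c r x a').indicator
    (fun j => 2 ^ finrank ℝ E * ENNReal.ofReal A * tailWeight (fun _ => 1) (5 * r j) (x - c j) *
      ∫⁻ y in annulus x a a', ‖b j y‖ₑ ∂μ) j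

/-- The constant in the `ℓ²` estimate for the bad pieces cut by a truncation sphere. -/
def crossingConst (μ : Measure E) (A : ℝ) : ℝ≥0∞ :=
  (2 ^ finrank ℝ E * ENNReal.ofReal A) ^ 2 *
    (2 ^ (finrank ℝ E + 3) * 5 ^ finrank ℝ E * ∫⁻ v, unitShellDensity v ∂μ)

variable {μ : Measure E} {f g : E → ℝ} {t : ℝ≥0∞} {c : ι → E} {r : ι → ℝ} {b : ι → E → ℝ}
  {x : E} {K : E → E → ℝ} {A : ℝ} {ω : ℝ → ℝ}

lemma tsum_interiorBound_le [BorelSpace E] (x : E) {ε : ℕ → ℝ} (hε : Antitone ε) :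
    ∑' i, interiorBound μ A ω c r b x (ε (i + 1)) (ε i) ≤
      ENNReal.ofReal A * badTail μ ω c r b x := by
  simp_rw [interiorBound]
  rw [ENNReal.tsum_comm, badTail, ← ENNReal.tsum_mul_left]
  refine ENNReal.tsum_le_tsum fun j => ?_
  rw [ENNReal.tsum_mul_left, mul_assoc]
  gcongr
  exact tsum_setLIntegral_annulus_le μ x hε _

namespace IsCZDecomposition

lemma integrable_good (hD : IsCZDecomposition μ f t c r g b) (hf : Integrable f μ) :
    Integrable g μ :=
  ⟨hD.measurable_good.aestronglyMeasurable, hD.lintegral_good_le.trans_lt hf.2⟩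

lemma tsum_lintegral_bad_ne_top (hD : IsCZDecomposition μ f t c r g b) (hf : Integrable f μ) :
    ∑' j, ∫⁻ y, ‖b j y‖ₑ ∂μ ≠ ∞ :=
  ne_top_of_le_ne_top (ENNReal.mul_ne_top ENNReal.ofNat_ne_top hf.2.ne) hD.tsum_lintegral_bad_le

variable [BorelSpace E]

lemma enorm_setIntegral_annulus_bad_le (hD : IsCZDecomposition μ f t c r g b)
    (hK : IsDiniKernel K A ω) (hx : x ∉ exceptionalSet c r) {a a' : ℝ} (ha : 0 < a) (j : ι) :
    ‖∫ y in annulus x a a', K x y * b j y ∂μ‖ₑ ≤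
      ENNReal.ofReal A * tailWeight ω (5 * r j) (x - c j) * ∫⁻ y in annulus x a a', ‖b j y‖ₑ ∂μ +
      (crossingIndices c r x a ∪ crossingIndices c r x a').indicator
        (fun j => 2 ^ finrank ℝ E * ENNReal.ofReal A *
          tailWeight (fun _ => 1) (5 * r j) (x - c j) * ∫⁻ y in annulus x a a', ‖b j y‖ₑ ∂μ) j := by
  have hl : 0 < 5 * r j := mul_pos (by norm_num) (hD.radius_pos j)
  have hxj := two_mul_le_dist_of_notMem_exceptionalSet hx j
  by_cases hj : j ∈ crossingIndices c r x a ∪ crossingIndices c r x a'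
  · rw [indicator_of_mem hj]
    exact (hK.enorm_setIntegral_mul_le_tailWeight_one hl (hD.bad_eq_zero j) hxj
      (measurableSet_annulus x a a')).trans le_add_self
  · rw [indicator_of_notMem hj, add_zero]
    obtain ⟨hja, hja'⟩ := not_or.1 hj
    exact hK.enorm_setIntegral_annulus_le_of_lt_abs hl (hD.integrable_bad j) (hD.bad_eq_zero j)
      (hD.integral_bad j) hxj ha (not_le.1 hja) (not_le.1 hja')

lemma ofReal_abs_truncatedIntegral_sub_le (hD : IsCZDecomposition μ f t c r g b)
    (hK : IsDiniKernel K A ω) (hf : Integrable f μ) (hx : x ∉ exceptionalSet c r) {a a' : ℝ}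
    (ha : 0 < a) (haa' : a ≤ a') :
    ENNReal.ofReal |truncatedIntegral μ K a f x - truncatedIntegral μ K a' f x| ≤
      ENNReal.ofReal |truncatedIntegral μ K a g x - truncatedIntegral μ K a' g x| +
      (interiorBound μ A ω c r b x a a' + crossingBound μ A c r b x a a') := by
  have := hD.countable
  have hg := hD.integrable_good hf
  rw [hK.truncatedIntegral_sub hf x ha haa', hK.truncatedIntegral_sub hg x ha haa',
    ← Real.enorm_eq_ofReal_abs, ← Real.enorm_eq_ofReal_abs,
    hK.setIntegral_annulus_eq_add_tsum hf hg hD.integrable_bad hD.hasSum_bad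
      (hD.tsum_lintegral_bad_ne_top hf) ha,
    interiorBound, crossingBound, ← ENNReal.tsum_add]
  refine (enorm_add_le _ _).trans (add_le_add_right (enorm_tsum_le_tsum_enorm.trans ?_) _)
  exact ENNReal.tsum_le_tsum (hD.enorm_setIntegral_annulus_bad_le hK hx ha)

variable [FiniteDimensional ℝ E] [μ.IsAddHaarMeasure]

lemma tsum_crossingIndices_le (hD : IsCZDecomposition μ f t c r g b)
    (hx : x ∉ exceptionalSet c r) {ε : ℝ} (hε : 0 < ε) :
    ∑' j, (crossingIndices c r x ε).indicator (fun j =>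
      tailWeight (fun s => (√s)⁻¹) (5 * r j) (x - c j) * ∫⁻ y, ‖b j y‖ₑ ∂μ) j ≤
      2 ^ (finrank ℝ E + 2) * 5 ^ finrank ℝ E * (∫⁻ v, unitShellDensity v ∂μ) * t := by
  have := hD.countable
  have shell_le := tsum_shell_tailWeight_le μ (l := fun j => 5 * r j)
    (fun j => mul_pos (by norm_num) (hD.radius_pos j))
    (fun j => isClosed_closedBall.measurableSet) hD.disjoint
    (fun j => closedBall_subset_closedBall (by linarith [hD.radius_pos j]))
    (two_mul_le_dist_of_notMem_exceptionalSet hx) hε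
  calc _ ≤ ∑' j, 2 * 5 ^ finrank ℝ E * t * (crossingIndices c r x ε).indicator (fun j =>
        tailWeight (fun s => (√s)⁻¹) (5 * r j) (x - c j) * μ (closedBall (c j) (r j))) j := by
        refine ENNReal.tsum_le_tsum (indicator_le fun j hj => ?_)
        rw [indicator_of_mem hj]
        refine (mul_le_mul_right (hD.lintegral_bad_le j) _).trans_eq ?_
        ring
    _ ≤ 2 * 5 ^ finrank ℝ E * t *
        (2 ^ (finrank ℝ E + 1) * ∫⁻ v, unitShellDensity v ∂μ) := by
        rw [ENNReal.tsum_mul_left]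
        gcongr
        exact shell_le
    _ = _ := by ring

lemma tsum_union_crossingIndices_le (hD : IsCZDecomposition μ f t c r g b)
    (hx : x ∉ exceptionalSet c r) {a a' : ℝ} (ha : 0 < a) (ha' : 0 < a') :
    ∑' j, (crossingIndices c r x a ∪ crossingIndices c r x a').indicator (fun j =>
      (2 ^ finrank ℝ E * ENNReal.ofReal A) ^ 2 *
        tailWeight (fun s => (√s)⁻¹) (5 * r j) (x - c j) * ∫⁻ y, ‖b j y‖ₑ ∂μ) j ≤
      crossingConst μ A * t := by
  set p : ι → ℝ≥0∞ := fun j =>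
    tailWeight (fun s => (√s)⁻¹) (5 * r j) (x - c j) * ∫⁻ y, ‖b j y‖ₑ ∂μ
  calc _ ≤ ∑' j, (2 ^ finrank ℝ E * ENNReal.ofReal A) ^ 2 *
        ((crossingIndices c r x a).indicator p j + (crossingIndices c r x a').indicator p j) := by
        refine ENNReal.tsum_le_tsum (indicator_le fun j hj => ?_)
        rw [mul_assoc]
        gcongr
        rcases hj with hj | hj
        · exact (indicator_of_mem hj p).ge.trans le_self_add
        · exact (indicator_of_mem hj p).ge.trans le_add_self
    _ ≤ (2 ^ finrank ℝ E * ENNReal.ofReal A) ^ 2 *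
        (2 ^ (finrank ℝ E + 2) * 5 ^ finrank ℝ E * (∫⁻ v, unitShellDensity v ∂μ) * t +
          2 ^ (finrank ℝ E + 2) * 5 ^ finrank ℝ E * (∫⁻ v, unitShellDensity v ∂μ) * t) := by
        rw [ENNReal.tsum_mul_left, ENNReal.tsum_add]
        gcongr
        · exact hD.tsum_crossingIndices_le hx ha
        · exact hD.tsum_crossingIndices_le hx ha'
    _ = crossingConst μ A * t := by rw [crossingConst]; ring

/- Cauchy–Schwarz with the weights `tailWeight (√·)⁻¹` and `tailWeight √`: the first is summable
over the pieces cut by one sphere, the second is a Dini tail. -/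
lemma tsum_sq_crossingBound_le (hD : IsCZDecomposition μ f t c r g b)
    (hx : x ∉ exceptionalSet c r) {ε : ℕ → ℝ} (hε : Antitone ε) (hpos : ∀ i, 0 < ε i) :
    ∑' i, crossingBound μ A c r b x (ε (i + 1)) (ε i) ^ 2 ≤
      crossingConst μ A * t * badTail μ Real.sqrt c r b x := by
  refine tsum_sq_tsum_indicator_le
    (p := fun j => (2 ^ finrank ℝ E * ENNReal.ofReal A) ^ 2 *
      tailWeight (fun s => (√s)⁻¹) (5 * r j) (x - c j))
    (fun j => tsum_setLIntegral_annulus_le μ x hε fun y => ‖b j y‖ₑ) (fun j => ?_)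
    (fun i => hD.tsum_union_crossingIndices_le hx (hpos (i + 1)) (hpos i))
  have hr := hD.radius_pos j
  have hxc : x - c j ≠ 0 := norm_pos_iff.1 <| by
    rw [← dist_eq_norm]
    linarith [two_mul_le_dist_of_notMem_exceptionalSet hx j]
  rw [mul_pow, tailWeight_one_sq (by positivity) hxc, mul_assoc]

lemma truncVariation_le (hD : IsCZDecomposition μ f t c r g b) (hK : IsDiniKernel K A ω)
    {ρ : ℝ} (hρ : 2 ≤ ρ) (hf : Integrable f μ) (hx : x ∉ exceptionalSet c r) :
    truncVariation μ K ρ f x ≤ truncVariation μ K ρ g x +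
      (ENNReal.ofReal A * badTail μ ω c r b x +
        (crossingConst μ A * t * badTail μ Real.sqrt c r b x) ^ (1 / 2 : ℝ)) := by
  have one_le_ρ : 1 ≤ ρ := one_le_two.trans hρ
  refine iSup₂_le fun ε hε => ?_
  have ⟨hanti, hpos, _⟩ := hε
  set interior : ℕ → ℝ≥0∞ := fun i => interiorBound μ A ω c r b x (ε (i + 1)) (ε i)
  set crossing : ℕ → ℝ≥0∞ := fun i => crossingBound μ A c r b x (ε (i + 1)) (ε i)
  set good : ℕ → ℝ≥0∞ := fun i => ENNReal.ofReal
    |truncatedIntegral μ K (ε (i + 1)) g x - truncatedIntegral μ K (ε i) g x|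
  calc _ ≤ (∑' i, (good i + (interior i + crossing i)) ^ ρ) ^ (1 / ρ) := by
        rw [variationAlong]
        gcongr with i
        exact hD.ofReal_abs_truncatedIntegral_sub_le hK hf hx (hpos _) (hanti i.lt_succ_self).le
    _ ≤ (∑' i, good i ^ ρ) ^ (1 / ρ) +
        ((∑' i, interior i ^ ρ) ^ (1 / ρ) + (∑' i, crossing i ^ ρ) ^ (1 / ρ)) :=
        (rpow_tsum_add_rpow_le one_le_ρ _ _).trans
          (add_le_add_right (rpow_tsum_add_rpow_le one_le_ρ _ _) _)
    _ ≤ _ := by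
        refine add_le_add (le_iSup₂ (f := fun ε _ => variationAlong ρ ε _) ε hε) (add_le_add ?_ ?_)
        · refine (rpow_tsum_rpow_anti one_pos one_le_ρ interior).trans ?_
          simpa using tsum_interiorBound_le x hanti.antitone
        · refine (rpow_tsum_rpow_anti two_pos hρ crossing).trans ?_
          gcongr
          simpa using hD.tsum_sq_crossingBound_le hx hanti.antitone hpos

end IsCZDecomposition

end Pointwise

section WeakType

open Metric Module

lemma mul_measure_half_le_of_lintegral_rpow_le {α : Type*} [MeasurableSpace α] {μ : Measure α}
    {V h : α → ℝ≥0∞} (hV : Measurable V) (hh : Measurable h) {q : ℝ} (hq : 1 ≤ q)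
    {B k t : ℝ≥0∞} (ht0 : t ≠ 0) (ht : t ≠ ∞)
    (hVh : ∫⁻ x, V x ^ q ∂μ ≤ B * ∫⁻ x, h x ^ q ∂μ) (hk : ∀ᵐ x ∂μ, h x ≤ k * t) :
    t * μ {x | t / 2 ≤ V x} ≤ 2 ^ q * B * k ^ (q - 1) * ∫⁻ x, h x ∂μ := by
  have hq0 : 0 < q := one_pos.trans_le hq
  have hq1 : 0 ≤ q - 1 := sub_nonneg.2 hq
  have split_rpow (a : ℝ≥0∞) : a ^ q = a ^ (q - 1) * a := by
    conv_lhs => rw [← sub_add_cancel q 1, ENNReal.rpow_add_of_nonneg _ _ hq1 zero_le_one,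
      ENNReal.rpow_one]
  have chebyshev : (t / 2) ^ q * μ {x | t / 2 ≤ V x} ≤ ∫⁻ x, V x ^ q ∂μ := by
    simpa only [ENNReal.rpow_le_rpow_iff hq0] using
      mul_meas_ge_le_lintegral (μ := μ) (hV.pow_const q) ((t / 2) ^ q)
  have interpolate : ∫⁻ x, h x ^ q ∂μ ≤ (k * t) ^ (q - 1) * ∫⁻ x, h x ∂μ := by
    rw [← lintegral_const_mul _ hh]
    refine lintegral_mono_ae (hk.mono fun x hx => ?_)
    rw [split_rpow]
    gcongr
  have two_rpow_mul : 2 ^ q * (t / 2) ^ q = t ^ (q - 1) * t := by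
    rw [← ENNReal.mul_rpow_of_nonneg _ _ hq0.le, ENNReal.mul_div_cancel two_ne_zero
      ENNReal.ofNat_ne_top, split_rpow]
  refine (ENNReal.mul_le_mul_iff_right (a := t ^ (q - 1)) (by simp [ht0, ht])
    (ENNReal.rpow_ne_top_of_nonneg hq1 ht)).1 ?_
  calc t ^ (q - 1) * (t * μ {x | t / 2 ≤ V x}) = 2 ^ q * ((t / 2) ^ q * μ {x | t / 2 ≤ V x}) := by
        rw [← mul_assoc, ← two_rpow_mul, mul_assoc]
    _ ≤ 2 ^ q * (B * ((k * t) ^ (q - 1) * ∫⁻ x, h x ∂μ)) :=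
        mul_le_mul_right (chebyshev.trans (hVh.trans (mul_le_mul_right interpolate B))) _
    _ = _ := by rw [ENNReal.mul_rpow_of_nonneg _ _ hq1]; ring

variable {E : Type*} [NormedAddCommGroup E] [NormedSpace ℝ E] [MeasurableSpace E] [BorelSpace E]
  {ι : Type*} {μ : Measure E} {f g : E → ℝ} {t : ℝ≥0∞} {c : ι → E} {r : ι → ℝ} {b : ι → E → ℝ}
  {K : E → E → ℝ} {A : ℝ} {ω : ℝ → ℝ}

namespace IsCZDecomposition

lemma measurable_badTail (hD : IsCZDecomposition μ f t c r g b) {φ : ℝ → ℝ}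
    (hφ : MonotoneOn φ (Ici 0)) : Measurable (badTail μ φ c r b) := by
  have := hD.countable
  refine Measurable.tsum fun j => Measurable.mul_const ?_ _
  exact (measurable_tailWeight hφ (by linarith [hD.radius_pos j])).comp (measurable_id.sub_const _)

variable [FiniteDimensional ℝ E] [μ.IsAddHaarMeasure]

lemma mul_measure_exceptionalSet_le (hD : IsCZDecomposition μ f t c r g b) :
    t * μ (exceptionalSet c r) ≤ 10 ^ finrank ℝ E * ∫⁻ y, ‖f y‖ₑ ∂μ := by
  have := hD.countable
  have measure_dilate (j : ι) : μ (closedBall (c j) (10 * r j)) =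
      10 ^ finrank ℝ E * μ (closedBall (c j) (r j)) := by
    rw [Measure.addHaar_closedBall_mul μ _ (by norm_num) (hD.radius_pos j).le,
      ENNReal.ofReal_pow (by norm_num), ENNReal.ofReal_ofNat,
      Measure.addHaar_closedBall_center μ (c j)]
  calc t * μ (exceptionalSet c r) ≤ t * ∑' j, μ (closedBall (c j) (10 * r j)) := by
        gcongr
        exact measure_iUnion_le _
    _ = 10 ^ finrank ℝ E * (t * ∑' j, μ (closedBall (c j) (r j))) := by
        simp_rw [measure_dilate, ENNReal.tsum_mul_left]
        ring
    _ ≤ _ := by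
        gcongr
        exact hD.mul_tsum_measure_le

lemma setLIntegral_badTail_le [Nontrivial E] (hD : IsCZDecomposition μ f t c r g b) {φ : ℝ → ℝ}
    (hφ : MonotoneOn φ (Ici 0)) :
    ∫⁻ x in (exceptionalSet c r)ᶜ, badTail μ φ c r b x ∂μ ≤
      2 * tailMass μ φ * ∫⁻ y, ‖f y‖ₑ ∂μ := by
  have := hD.countable
  have radius_pos (j : ι) : 0 < 5 * r j := mul_pos (by norm_num) (hD.radius_pos j)
  have tail_meas (j : ι) : Measurable fun x => tailWeight φ (5 * r j) (x - c j) :=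
    (measurable_tailWeight hφ (radius_pos j).le).comp (measurable_id.sub_const _)
  calc ∫⁻ x in (exceptionalSet c r)ᶜ, badTail μ φ c r b x ∂μ
      = ∑' j, (∫⁻ x in (exceptionalSet c r)ᶜ, tailWeight φ (5 * r j) (x - c j) ∂μ) *
          ∫⁻ y, ‖b j y‖ₑ ∂μ := by
        simp_rw [badTail, lintegral_tsum fun j => ((tail_meas j).mul_const _).aemeasurable,
          lintegral_mul_const _ (tail_meas _)]
    _ ≤ ∑' j, tailMass μ φ * ∫⁻ y, ‖b j y‖ₑ ∂μ := by
        refine ENNReal.tsum_le_tsum fun j => mul_le_mul_left ?_ _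
        refine setLIntegral_tailWeight_sub_le μ hφ (radius_pos j) fun x hx => ?_
        linarith [two_mul_le_dist_of_notMem_exceptionalSet hx j, radius_pos j]
    _ ≤ tailMass μ φ * (2 * ∫⁻ y, ‖f y‖ₑ ∂μ) := by
        rw [ENNReal.tsum_mul_left]
        gcongr
        exact hD.tsum_lintegral_bad_le
    _ = _ := by ring

lemma mul_measure_badTail_ge_le [Nontrivial E] (hD : IsCZDecomposition μ f t c r g b)
    {φ : ℝ → ℝ} (hφ : MonotoneOn φ (Ici 0)) (k s : ℝ≥0∞) :
    s * μ ((exceptionalSet c r)ᶜ ∩ {x | s ≤ k * badTail μ φ c r b x}) ≤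
      k * (2 * tailMass μ φ * ∫⁻ y, ‖f y‖ₑ ∂μ) := by
  have tail_meas := hD.measurable_badTail hφ
  have chebyshev := mul_meas_ge_le_lintegral (μ := μ.restrict (exceptionalSet c r)ᶜ)
    (tail_meas.const_mul k) s
  rw [Measure.restrict_apply (measurableSet_le measurable_const (tail_meas.const_mul k)),
    inter_comm, lintegral_const_mul _ tail_meas] at chebyshev
  exact chebyshev.trans (mul_le_mul_right (hD.setLIntegral_badTail_le hφ) k)

lemma setOf_lt_truncVariation_subset (hD : IsCZDecomposition μ f t c r g b)
    (hK : IsDiniKernel K A ω) {ρ : ℝ} (hρ : 2 ≤ ρ) (hf : Integrable f μ) :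
    {x | t < truncVariation μ K ρ f x} ⊆
      exceptionalSet c r ∪ {x | t / 2 ≤ truncVariation μ K ρ g x} ∪
      (exceptionalSet c r)ᶜ ∩ {x | t / 4 ≤ ENNReal.ofReal A * badTail μ ω c r b x} ∪
      (exceptionalSet c r)ᶜ ∩
        {x | (t / 4) ^ 2 ≤ crossingConst μ A * t * badTail μ Real.sqrt c r b x} := by
  intro x hxt
  by_contra hcon
  simp only [mem_union, mem_inter_iff, mem_compl_iff, mem_ofPred_eq, not_or, not_and,
    not_le] at hcon
  obtain ⟨⟨⟨hx, good_lt⟩, interior_lt⟩, crossing_lt⟩ := hcon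
  have crossing_root_lt :
      (crossingConst μ A * t * badTail μ Real.sqrt c r b x) ^ (1 / 2 : ℝ) < t / 4 := by
    rw [one_div, ENNReal.rpow_inv_lt_iff two_pos, ENNReal.rpow_two]
    exact crossing_lt hx
  have quarters : t / 4 + t / 4 = t / 2 := by
    rw [ENNReal.eq_div_iff two_ne_zero ENNReal.ofNat_ne_top]
    calc 2 * (t / 4 + t / 4) = 4 * (t / 4) := by ring
      _ = t := ENNReal.mul_div_cancel four_ne_zero ENNReal.ofNat_ne_top
  refine lt_asymm (mem_ofPred_eq ▸ hxt) ?_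
  calc truncVariation μ K ρ f x ≤ _ := hD.truncVariation_le hK hρ hf hx
    _ < t / 2 + (t / 4 + t / 4) :=
        ENNReal.add_lt_add good_lt (ENNReal.add_lt_add (interior_lt hx) crossing_root_lt)
    _ = t := by rw [quarters, ENNReal.add_halves]

lemma mul_measure_interior_ge_le [Nontrivial E] (hD : IsCZDecomposition μ f t c r g b)
    (hω : MonotoneOn ω (Ici 0)) :
    t * μ ((exceptionalSet c r)ᶜ ∩ {x | t / 4 ≤ ENNReal.ofReal A * badTail μ ω c r b x}) ≤
      4 * ENNReal.ofReal A * (2 * tailMass μ ω) * ∫⁻ y, ‖f y‖ₑ ∂μ := by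
  have four_mul : 4 * (t / 4) = t := ENNReal.mul_div_cancel four_ne_zero ENNReal.ofNat_ne_top
  nth_rw 1 [← four_mul]
  rw [mul_assoc]
  refine (mul_le_mul_right (hD.mul_measure_badTail_ge_le hω _ (t / 4)) 4).trans_eq ?_
  ring

lemma mul_measure_crossing_ge_le [Nontrivial E] (hD : IsCZDecomposition μ f t c r g b)
    (ht0 : t ≠ 0) (ht : t ≠ ∞) :
    t * μ ((exceptionalSet c r)ᶜ ∩
        {x | (t / 4) ^ 2 ≤ crossingConst μ A * t * badTail μ Real.sqrt c r b x}) ≤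
      16 * crossingConst μ A * (2 * tailMass μ Real.sqrt) * ∫⁻ y, ‖f y‖ₑ ∂μ := by
  have sq_eq : 16 * (t / 4) ^ 2 = t * t := by
    calc 16 * (t / 4) ^ 2 = 4 * (t / 4) * (4 * (t / 4)) := by ring
      _ = t * t := by rw [ENNReal.mul_div_cancel four_ne_zero ENNReal.ofNat_ne_top]
  refine (ENNReal.mul_le_mul_iff_right ht0 ht).1 ?_
  rw [← mul_assoc, ← sq_eq, mul_assoc]
  refine (mul_le_mul_right (hD.mul_measure_badTail_ge_le (Real.sqrt_monotone.monotoneOn _)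
    (crossingConst μ A * t) ((t / 4) ^ 2)) 16).trans_eq ?_
  ring

end IsCZDecomposition

variable [FiniteDimensional ℝ E] [μ.IsAddHaarMeasure] [Nontrivial E]

lemma crossingConst_ne_top (A : ℝ) : crossingConst μ A ≠ ∞ := by
  have := lintegral_unitShellDensity_ne_top μ
  rw [crossingConst]
  finiteness

namespace IsDiniKernel

variable {ρ q : ℝ} {B : ℝ≥0∞}

lemma exists_mul_measure_lt_truncVariation_le (hK : IsDiniKernel K A ω) (hρ : 2 ≤ ρ)
    (hq : 1 ≤ q) (hB : B ≠ ∞) (hbdd : ∀ f : E → ℝ, Measurable f →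
      ∫⁻ x, truncVariation μ K ρ f x ^ q ∂μ ≤ B * ∫⁻ x, ‖f x‖ₑ ^ q ∂μ) :
    ∃ C : ℝ≥0∞, C ≠ ∞ ∧ ∀ f : E → ℝ, Measurable f → Integrable f μ → ∀ t, t ≠ 0 → t ≠ ∞ →
      t * μ {x | t < truncVariation μ K ρ f x} ≤ C * ∫⁻ x, ‖f x‖ₑ ∂μ := by
  have tailMass_ω := tailMass_ne_top (μ := μ) hK.dini
  have tailMass_sqrt := tailMass_ne_top (μ := μ) setLIntegral_Ioo_sqrt_div_ne_top
  have crossing_ne_top := crossingConst_ne_top (μ := μ) A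
  have : 0 ≤ q - 1 := sub_nonneg.2 hq
  refine ⟨10 ^ finrank ℝ E + 2 ^ q * B * (5 ^ finrank ℝ E) ^ (q - 1) +
    4 * ENNReal.ofReal A * (2 * tailMass μ ω) +
    16 * crossingConst μ A * (2 * tailMass μ Real.sqrt), by finiteness,
    fun f hfm hf t ht0 ht => ?_⟩
  obtain ⟨u, r, g, b, hD⟩ := exists_isCZDecomposition hfm hf ht0
  have good_le := mul_measure_half_le_of_lintegral_rpow_le
    (hK.measurable_truncVariation (zero_le_two.trans hρ) hD.measurable_good (hD.integrable_good hf))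
    hD.measurable_good.enorm hq ht0 ht (hbdd g hD.measurable_good) hD.good_ae_le
  refine (mul_le_mul_right ((measure_mono (hD.setOf_lt_truncVariation_subset hK hρ hf)).trans <|
    (measure_union_le _ _).trans <| add_le_add_left ((measure_union_le _ _).trans <|
      add_le_add_left (measure_union_le _ _) _) _) t).trans ?_
  simp_rw [mul_add, add_mul]
  refine add_le_add (add_le_add (add_le_add ?_ ?_) ?_) ?_
  · exact hD.mul_measure_exceptionalSet_le
  · exact good_le.trans (mul_le_mul_right hD.lintegral_good_le _)
  · exact hD.mul_measure_interior_ge_le hK.monotoneOn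
  · exact hD.mul_measure_crossing_ge_le ht0 ht

end IsDiniKernel

theorem variation_weak_type_one_one_general (hK : IsDiniKernel K A ω) {ρ q B : ℝ} (hρ : 2 ≤ ρ)
    (hq : 1 ≤ q) (hbdd : ∀ f : E → ℝ, Measurable f → ∫⁻ x, truncVariation μ K ρ f x ^ q ∂μ ≤
      ENNReal.ofReal B * ∫⁻ x, ENNReal.ofReal |f x| ^ q ∂μ) :
    ∃ C : ℝ, 0 < C ∧ ∀ f : E → ℝ, Measurable f → ∀ t : ℝ, 0 < t →
      μ {x | ENNReal.ofReal t < truncVariation μ K ρ f x} ≤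
        ENNReal.ofReal C * (ENNReal.ofReal t)⁻¹ * ∫⁻ x, ENNReal.ofReal |f x| ∂μ := by
  simp_rw [← Real.enorm_eq_ofReal_abs] at hbdd ⊢
  obtain ⟨C, hC, weak_type⟩ :=
    hK.exists_mul_measure_lt_truncVariation_le hρ hq ENNReal.ofReal_ne_top hbdd
  refine ⟨C.toReal + 1, by positivity, fun f hfm t ht => ?_⟩
  have ht0 : ENNReal.ofReal t ≠ 0 := (ENNReal.ofReal_pos.2 ht).ne'
  have hC' : C ≤ ENNReal.ofReal (C.toReal + 1) :=
    (ENNReal.le_ofReal_iff_toReal_le hC (by positivity)).2 (lt_add_one _).le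
  by_cases hf : ∫⁻ x, ‖f x‖ₑ ∂μ = ∞
  · have hC0 : ENNReal.ofReal (C.toReal + 1) ≠ 0 := (ENNReal.ofReal_pos.2 (by positivity)).ne'
    simp [hf, ENNReal.mul_top (mul_ne_zero hC0 (ENNReal.inv_ne_zero.2 ENNReal.ofReal_ne_top))]
  · rw [mul_right_comm, ← div_eq_mul_inv,
      ENNReal.le_div_iff_mul_le (.inl ht0) (.inl ENNReal.ofReal_ne_top), mul_comm]
    exact (weak_type f hfm ⟨hfm.aestronglyMeasurable, lt_top_iff_ne_top.2 hf⟩ _ ht0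
      ENNReal.ofReal_ne_top).trans (mul_le_mul_left hC' _)

end WeakType

lemma CZO.isDiniKernel {d : ℕ} (S : CZO d) : IsDiniKernel S.K S.Cst S.ω where
  measurable := S.measK
  const_nonneg := S.hCst.le
  size := by simpa only [finrank_euclideanSpace_fin] using S.size
  smooth x y y' hxy hy := by
    have smooth := S.smooth y y' x hxy.symm (dist_comm x y ▸ hy)
    rw [dist_comm y x] at smooth
    rw [finrank_euclideanSpace_fin]
    exact (le_add_of_nonneg_left (abs_nonneg _)).trans smooth
  monotoneOn := S.ω_mono
  dini := ((lintegral_mono fun _ => Real.ofReal_le_enorm _).trans_lt S.dini.2).ne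

/-- If `V_ρ(T_*)` is bounded on `L^q(ℝ^d)` for some `q ∈ (1,∞)`, then
`V_ρ(T_*)` is of weak type `(1,1)`. -/
theorem variation_weak_type_one_one
    (d : ℕ) (hd : 0 < d) (S : CZO d) (ρ q : ℝ) (hρ : 2 < ρ) (hq : 1 < q)
    (hbdd : S.VarBdd ρ q) :
    ∃ C : ℝ, 0 < C ∧ ∀ f : Rd d → ℝ, Measurable f → ∀ t : ℝ, 0 < t →
      volume {x | ENNReal.ofReal t < S.var ρ f x} ≤
        ENNReal.ofReal C * (ENNReal.ofReal t)⁻¹ * ∫⁻ x, ENNReal.ofReal |f x| ∂volume := by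
  have : Nonempty (Fin d) := ⟨⟨0, hd⟩⟩
  obtain ⟨B, -, hB⟩ := hbdd
  exact variation_weak_type_one_one_general S.isDiniKernel hρ.le hq.le hB
end
end

section
/- Let T be a scalar Calderón–Zygmund operator on ℝ^d with modulus of continuity ω satisfying the Dini condition, let ρ ∈ (2,∞), and assume V_ρ(T_*) is bounded on L^q(ℝ^d) for some q ∈ (1,∞) (so in particular V_ρ(T_*) is of weak type (1,1)). Then for every cube Q₀ ⊂ ℝ^d and every f ∈ L^∞(ℝ^d) supported in Q₀, for a.e. x ∈ Q₀ one has V_ρ(T_*(f χ_{3Q₀}))(x) ≤ C ‖V_ρ(T_*)‖_{L^1(ℝ^d)→L^{1,∞}(ℝ^d)} |f(x)| + M_{V_ρ(T_*),Q₀} f(x), where C depends only on d. -/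
open MeasureTheory Set Filter Classical
open scoped ENNReal
noncomputable section

/-!
Let `F = f χ_{3Q₀}`, let `x` be an interior point of `Q₀` and `Q ∋ x` a small cube. The variation
is sublinear, so `V_ρ(T_* F) ≤ V_ρ(T_* (F χ_{3Q})) + V_ρ(T_* (f χ_{3Q₀ ∖ 3Q}))`, and the second
term is at most `M_{V_ρ(T_*),Q₀} f(x)` almost everywhere on `Q`. By the weak type `(p, p)`
inequality the set of `y ∈ Q` with `V_ρ(T_* F)(y) > M_{V_ρ(T_*),Q₀} f(x) + t` thus has measure
`≲ t^{-p} ∫_{3Q} |F|^p`. If `V_ρ(T_* F)(x) > M_{V_ρ(T_*),Q₀} f(x) + t` and `x` is a density point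
of the superlevel sets of `V_ρ(T_* F)` and a Lebesgue point of `|F|^p`, dividing by `|Q|` and
shrinking `Q` to `x` gives `t^p ≲ |f(x)|^p`.

When the weak `(1,1)` norm is finite, take `p = 1`. When it is infinite, only the points where `f`
vanishes matter, and there `p = q` with the assumed `L^q` bound suffices. Chebyshev's inequality in
`L^q` needs `V_ρ(T_* F)` to be measurable: since `ε ↦ T_ε F(x)` is right-continuous, the variation
is a supremum over finite tuples of rational radii.
-/

open Metric Topology Module

section Integration

lemma indicator_eq_indicator_indicator_add_sdiff {X M : Type*} [AddZeroClass M] (s t : Set X)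
    (F : X → M) :
    s.indicator F = t.indicator (s.indicator F) + (s \ t).indicator F := by
  rw [sdiff_eq, inter_comm, ← indicator_indicator, indicator_self_add_compl]

lemma lintegral_enorm_indicator_rpow {X E : Type*} [MeasurableSpace X] {μ : Measure X}
    [NormedAddCommGroup E] {s : Set X} (hs : MeasurableSet s) (F : X → E) {p : ℝ} (hp : 0 < p) :
    ∫⁻ x, ‖s.indicator F x‖ₑ ^ p ∂μ = ∫⁻ x in s, ‖F x‖ₑ ^ p ∂μ := by
  rw [← lintegral_indicator hs]
  refine lintegral_congr fun x => ?_
  by_cases hx : x ∈ s <;> simp [hx, hp]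

lemma measurableSet_lt_dist_s3 {X : Type*} [PseudoMetricSpace X] [MeasurableSpace X]
    [OpensMeasurableSpace X] (x : X) (ε : ℝ) : MeasurableSet {y | ε < dist x y} :=
  (isOpen_lt continuous_const (continuous_const.dist continuous_id)).measurableSet

lemma continuousWithinAt_Ioi_setIntegral_lt {X E : Type*} [MeasurableSpace X] {μ : Measure X}
    [NormedAddCommGroup E] [NormedSpace ℝ E] {φ : X → ℝ} (hφ : Measurable φ) {F : X → E} {r : ℝ}
    (hF : IntegrableOn F {y | r < φ y} μ) :
    ContinuousWithinAt (fun s => ∫ y in {y | s < φ y}, F y ∂μ) (Ioi r) r := by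
  have superlevel_meas (s : ℝ) : MeasurableSet {y | s < φ y} := measurableSet_lt measurable_const hφ
  have superlevel_anti {s : ℝ} (hs : s ∈ Ioi r) : {y | s < φ y} ⊆ {y | r < φ y} :=
    fun y (hy : s < φ y) => lt_trans hs hy
  simp only [ContinuousWithinAt, ← integral_indicator (superlevel_meas _)]
  refine tendsto_integral_filter_of_dominated_convergence
    (fun y => ‖{y | r < φ y}.indicator F y‖) ?_ ?_ ?_ ?_
  · filter_upwards [self_mem_nhdsWithin] with s hs
    exact (hF.mono_set (superlevel_anti hs)).integrable_indicator (superlevel_meas s) |>.1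
  · filter_upwards [self_mem_nhdsWithin] with s hs
    exact Eventually.of_forall fun y => norm_indicator_le_of_subset (superlevel_anti hs) F y
  · exact (hF.integrable_indicator (superlevel_meas r)).norm
  · refine Eventually.of_forall fun y => tendsto_const_nhds.congr' ?_
    rcases lt_or_ge r (φ y) with hy | hy
    · filter_upwards [mem_nhdsWithin_of_mem_nhds (Iio_mem_nhds hy)] with s (hs : s < φ y)
      simp [indicator, hy, hs]
    · filter_upwards [self_mem_nhdsWithin] with s hs
      simp [indicator, hy.not_gt, (hy.trans (le_of_lt hs)).not_gt]

end Integration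

section Variation

variable {E : Type*} [NormedAddCommGroup E] {ρ : ℝ} {N : ℕ}

/-- The sequences of truncation radii admitted in the variation: strictly decreasing, positive,
with limit `0`. -/
def IsTruncationSeq (ε : ℕ → ℝ) : Prop :=
  StrictAnti ε ∧ (∀ i, 0 < ε i) ∧ Tendsto ε atTop (𝓝 0)

/-- The `ρ`-variation on `(0, ∞)` of a function `a` of the truncation radius. Evaluated at
`a ε = T_ε f(x)` it is `V_ρ(T_* f)(x)`. -/
def rhoVariation (ρ : ℝ) (a : ℝ → E) : ℝ≥0∞ :=
  ⨆ (ε : ℕ → ℝ) (_ : IsTruncationSeq ε), (∑' i, ‖a (ε (i + 1)) - a (ε i)‖ₑ ^ ρ) ^ (1 / ρ)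

/-- The `ρ`-variation of `a` along a finite tuple of radii. Suprema of these over rational tuples
make `rhoVariation` measurable. -/
def finRhoVariation (ρ : ℝ) (a : ℝ → E) (r : Fin (N + 1) → ℝ) : ℝ≥0∞ :=
  (∑ i : Fin N, ‖a (r i.succ) - a (r i.castSucc)‖ₑ ^ ρ) ^ (1 / ρ)

lemma tsum_add_rpow_le {ι : Type*} (u v : ι → ℝ≥0∞) (hρ : 1 ≤ ρ) :
    (∑' i, (u i + v i) ^ ρ) ^ (1 / ρ) ≤
      (∑' i, u i ^ ρ) ^ (1 / ρ) + (∑' i, v i ^ ρ) ^ (1 / ρ) := by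
  let _ : MeasurableSpace ι := ⊤
  simpa only [lintegral_count, Pi.add_apply] using
    ENNReal.lintegral_Lp_add_le (μ := Measure.count) (f := u) (g := v)
      measurable_from_top.aemeasurable measurable_from_top.aemeasurable hρ

lemma rhoVariation_le_add {a b c : ℝ → E} (hρ : 1 ≤ ρ) (habc : ∀ r > 0, c r = a r + b r) :
    rhoVariation ρ c ≤ rhoVariation ρ a + rhoVariation ρ b := by
  refine iSup₂_le fun ε hε => ?_
  have increment_le (i : ℕ) : ‖c (ε (i + 1)) - c (ε i)‖ₑ ≤
      ‖a (ε (i + 1)) - a (ε i)‖ₑ + ‖b (ε (i + 1)) - b (ε i)‖ₑ := by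
    rw [habc _ (hε.2.1 _), habc _ (hε.2.1 _), add_sub_add_comm]
    exact enorm_add_le _ _
  calc (∑' i, ‖c (ε (i + 1)) - c (ε i)‖ₑ ^ ρ) ^ (1 / ρ)
      ≤ (∑' i, (‖a (ε (i + 1)) - a (ε i)‖ₑ + ‖b (ε (i + 1)) - b (ε i)‖ₑ) ^ ρ) ^ (1 / ρ) := by
        gcongr with i
        exact increment_le i
    _ ≤ (∑' i, ‖a (ε (i + 1)) - a (ε i)‖ₑ ^ ρ) ^ (1 / ρ) +
        (∑' i, ‖b (ε (i + 1)) - b (ε i)‖ₑ ^ ρ) ^ (1 / ρ) := tsum_add_rpow_le _ _ hρ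
    _ ≤ rhoVariation ρ a + rhoVariation ρ b :=
        add_le_add (le_iSup₂_of_le ε hε le_rfl) (le_iSup₂_of_le ε hε le_rfl)

lemma exists_isTruncationSeq_extending {r : Fin (N + 1) → ℝ} (hr : StrictAnti r)
    (hpos : ∀ i, 0 < r i) : ∃ ε, IsTruncationSeq ε ∧ ∀ i : Fin (N + 1), ε i = r i := by
  -- For `i ≤ N` the truncated subtraction makes the denominator `1`.
  let ε : ℕ → ℝ := fun i => r ⟨min i N, by omega⟩ / 2 ^ (i - N)
  have ε_eq_of_le {i : ℕ} (hi : i ≤ N) : ε i = r ⟨i, by omega⟩ := by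
    simp [ε, min_eq_left hi, Nat.sub_eq_zero_of_le hi]
  have ε_add (i : ℕ) : ε (i + N) = r (Fin.last N) * (1 / 2) ^ i := by
    simp [ε, Fin.last, div_eq_mul_inv]
  refine ⟨ε, ⟨strictAnti_nat_of_succ_lt fun i => ?_, fun i => ?_, ?_⟩, fun i =>
    ε_eq_of_le (Nat.lt_succ_iff.1 i.2)⟩
  · rcases lt_or_ge i N with hi | hi
    · rw [ε_eq_of_le hi, ε_eq_of_le hi.le]
      exact hr (Fin.mk_lt_mk.2 i.lt_succ_self)
    · obtain ⟨j, rfl⟩ := Nat.exists_eq_add_of_le' hi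
      rw [add_right_comm, ε_add, ε_add, pow_succ]
      have : 0 < r (Fin.last N) * (1 / 2) ^ j := mul_pos (hpos _) (by positivity)
      linarith
  · exact div_pos (hpos _) (by positivity)
  · rw [← tendsto_add_atTop_iff_nat N]
    simpa only [ε_add, mul_zero] using
      (tendsto_pow_atTop_nhds_zero_of_lt_one (r := (1 / 2 : ℝ)) (by norm_num)
        (by norm_num)).const_mul (r (Fin.last N))

lemma finRhoVariation_le_rhoVariation (hρ : 0 < ρ) (a : ℝ → E) {r : Fin (N + 1) → ℝ}
    (hr : StrictAnti r) (hpos : ∀ i, 0 < r i) :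
    finRhoVariation ρ a r ≤ rhoVariation ρ a := by
  obtain ⟨ε, hε, hεr⟩ := exists_isTruncationSeq_extending hr hpos
  refine le_iSup₂_of_le ε hε (ENNReal.rpow_le_rpow ?_ (by positivity))
  calc ∑ i : Fin N, ‖a (r i.succ) - a (r i.castSucc)‖ₑ ^ ρ
      = ∑ i ∈ Finset.range N, ‖a (ε (i + 1)) - a (ε i)‖ₑ ^ ρ := by
        simp [Finset.sum_range, ← hεr]
    _ ≤ ∑' i, ‖a (ε (i + 1)) - a (ε i)‖ₑ ^ ρ := ENNReal.sum_le_tsum _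

lemma rhoVariation_le_iff (hρ : 0 < ρ) {a : ℝ → E} {c : ℝ≥0∞} :
    rhoVariation ρ a ≤ c ↔ ∀ (N : ℕ) (r : Fin (N + 1) → ℝ), StrictAnti r → (∀ i, 0 < r i) →
      finRhoVariation ρ a r ≤ c := by
  refine ⟨fun h N r hr hpos => (finRhoVariation_le_rhoVariation hρ a hr hpos).trans h,
    fun h => iSup₂_le fun ε hε => ?_⟩
  rw [one_div, ENNReal.rpow_inv_le_iff hρ, ENNReal.tsum_eq_iSup_nat]
  refine iSup_le fun N => ?_
  rw [← ENNReal.rpow_inv_le_iff hρ, ← one_div, Finset.sum_range]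
  exact h N (fun i => ε i) (hε.1.comp_strictMono Fin.val_strictMono) fun i => hε.2.1 i

lemma tendsto_finRhoVariation {ι : Type*} {l : Filter ι} {a : ℝ → E} {r : Fin (N + 1) → ℝ}
    {u : ι → Fin (N + 1) → ℝ} (h : ∀ i, Tendsto (fun k => a (u k i)) l (𝓝 (a (r i)))) :
    Tendsto (fun k => finRhoVariation ρ a (u k)) l (𝓝 (finRhoVariation ρ a r)) :=
  (tendsto_finsetSum _ fun i _ => ((h i.succ).sub (h i.castSucc)).enorm.ennrpow_const ρ)
    |>.ennrpow_const _

lemma rhoVariation_le_iff_rat (hρ : 0 < ρ) {a : ℝ → E}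
    (ha : ∀ r > 0, ContinuousWithinAt a (Ioi r) r) {c : ℝ≥0∞} :
    rhoVariation ρ a ≤ c ↔ ∀ (N : ℕ) (r : Fin (N + 1) → ℚ), StrictAnti r → (∀ i, 0 < r i) →
      finRhoVariation ρ a (fun i => (r i : ℝ)) ≤ c := by
  refine (rhoVariation_le_iff hρ).trans ⟨fun h N r hr hpos =>
    h N _ (Rat.cast_strictMono.comp_strictAnti hr) fun i => Rat.cast_pos.2 (hpos i),
    fun h N r hr hpos => ?_⟩
  choose u _ hu_gt hu_lim using fun i =>
    (Rat.denseRange_cast (𝕜 := ℝ)).exists_seq_strictAnti_tendsto Rat.cast_mono (r i)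
  have a_lim (i : Fin (N + 1)) : Tendsto (fun k => a (u i k)) atTop (𝓝 (a (r i))) :=
    (ha (r i) (hpos i)).tendsto.comp
      (tendsto_nhdsWithin_iff.2 ⟨hu_lim i, Eventually.of_forall (hu_gt i)⟩)
  have u_strictAnti : ∀ᶠ k in atTop, StrictAnti fun i => u i k := by
    simp only [StrictAnti, eventually_all]
    intro i j hij
    filter_upwards [(hu_lim j).eventually_lt (hu_lim i) (hr hij)] with k hk
    exact Rat.cast_lt.1 hk
  refine le_of_tendsto (tendsto_finRhoVariation a_lim) ?_
  filter_upwards [u_strictAnti] with k hk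
  exact h N _ hk fun i => Rat.cast_pos.1 ((hpos i).trans (hu_gt i k))

lemma measurable_rhoVariation {X : Type*} [MeasurableSpace X] (hρ : 0 < ρ) {a : X → ℝ → E}
    (ha_meas : ∀ r, StronglyMeasurable fun x => a x r)
    (ha_cont : ∀ x, ∀ r > 0, ContinuousWithinAt (a x) (Ioi r) r) :
    Measurable fun x => rhoVariation ρ (a x) := by
  have eq_iSup (x : X) : rhoVariation ρ (a x) = ⨆ (N : ℕ) (r : Fin (N + 1) → ℚ)
      (_ : StrictAnti r ∧ ∀ i, 0 < r i), finRhoVariation ρ (a x) (fun i => (r i : ℝ)) :=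
    eq_of_forall_ge_iff fun c => by
      simp only [rhoVariation_le_iff_rat hρ (ha_cont x), iSup_le_iff, and_imp]
  simp only [eq_iSup, finRhoVariation]
  refine .iSup fun N => .iSup fun r => .iSup_Prop _ ?_
  exact (Finset.measurable_fun_sum _ fun i _ =>
    ((ha_meas _).sub (ha_meas _)).enorm.pow_const ρ).pow_const _

end Variation

section Differentiation

lemma tendsto_const_mul_nhdsGT_zero {c : ℝ} (hc : 0 < c) :
    Tendsto (fun r => c * r) (𝓝[>] 0) (𝓝[>] 0) :=
  tendsto_nhdsWithin_iff.2 ⟨((continuous_const_mul c).tendsto' 0 0 (mul_zero c)).mono_left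
    nhdsWithin_le_nhds, eventually_mem_nhdsWithin.mono fun _ hr => mul_pos hc hr⟩

variable {E : Type*} [NormedAddCommGroup E] [NormedSpace ℝ E] [FiniteDimensional ℝ E]
  [MeasurableSpace E] [BorelSpace E] (μ : Measure E) [μ.IsAddHaarMeasure]

lemma ae_tendsto_lintegral_closedBall_div {g : E → ℝ≥0∞} (hg : AEMeasurable g μ)
    (hg_fin : ∫⁻ y, g y ∂μ ≠ ∞) :
    ∀ᵐ x ∂μ, Tendsto (fun r => (∫⁻ y in closedBall x r, g y ∂μ) / μ (closedBall x r)) (𝓝[>] 0)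
      (𝓝 (g x)) := by
  filter_upwards [(Besicovitch.vitaliFamily μ).ae_tendsto_lintegral_div hg hg_fin] with x hx
  exact hx.comp (Besicovitch.tendsto_filterAt μ x)

lemma ae_tendsto_measure_superlevel_div (V : E → ℝ≥0∞) :
    ∀ᵐ x ∂μ, ∀ q : ℚ, ENNReal.ofReal q < V x →
      Tendsto (fun r => μ ({y | ENNReal.ofReal q < V y} ∩ closedBall x r) / μ (closedBall x r))
        (𝓝[>] 0) (𝓝 1) :=
  ae_all_iff.2 fun q => ae_imp_of_ae_restrict
    (Besicovitch.ae_tendsto_measure_inter_div μ {y | ENNReal.ofReal q < V y})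

lemma div_measure_closedBall_eq (x : E) {c r : ℝ} (hc : 0 < c) (hr : 0 ≤ r) (b : ℝ≥0∞) :
    b / μ (closedBall x r) =
      ENNReal.ofReal (c ^ finrank ℝ E) * (b / μ (closedBall x (c * r))) := by
  have hc' : ENNReal.ofReal (c ^ finrank ℝ E) ≠ 0 := by simpa using by positivity
  rw [Measure.addHaar_closedBall_mul μ x hc.le hr, ← Measure.addHaar_closedBall_center μ x r,
    ← mul_div_assoc, ENNReal.mul_div_mul_left _ _ hc' ENNReal.ofReal_ne_top]

lemma ae_le_add_of_eventually_closedBall_le {V G g : E → ℝ≥0∞} {Ω : Set E} {A : ℝ≥0∞}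
    {p c : ℝ} (hp : 0 < p) (hc : 0 < c) (hA : A ≠ ∞) (hg : AEMeasurable g μ)
    (hg_fin : ∫⁻ y, g y ∂μ ≠ ∞)
    (h : ∀ x ∈ Ω, ∀ t : ℝ≥0∞, t ≠ 0 → t ≠ ∞ → ∀ᶠ r in 𝓝[>] 0,
      t ^ p * μ ({y | G x + t < V y} ∩ closedBall x r) ≤
        A * ∫⁻ y in closedBall x (c * r), g y ∂μ) :
    ∀ᵐ x ∂μ, x ∈ Ω →
      V x ≤ (ENNReal.ofReal (c ^ finrank ℝ E) * A * g x) ^ (1 / p) + G x := by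
  set D := ENNReal.ofReal (c ^ finrank ℝ E)
  filter_upwards [ae_tendsto_measure_superlevel_div μ V,
    ae_tendsto_lintegral_closedBall_div μ hg hg_fin] with x density average hxΩ
  by_contra! hlt
  obtain ⟨q, -, hq_gt, hqV⟩ := ENNReal.lt_iff_exists_rat_btwn.1 hlt
  change _ < ENNReal.ofReal q at hq_gt
  set t := ENNReal.ofReal q - G x
  have bound_lt_t : (D * A * g x) ^ (1 / p) < t := lt_tsub_iff_right.2 hq_gt
  have Gx_add_t : G x + t = ENNReal.ofReal q :=
    add_tsub_cancel_of_le (le_add_self.trans hq_gt.le)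
  have ht_top : t ≠ ∞ := ENNReal.sub_ne_top ENNReal.ofReal_ne_top
  have average_le : ∀ᶠ r in 𝓝[>] 0,
      t ^ p * (μ ({y | ENNReal.ofReal q < V y} ∩ closedBall x r) / μ (closedBall x r)) ≤
        D * A * ((∫⁻ y in closedBall x (c * r), g y ∂μ) / μ (closedBall x (c * r))) := by
    filter_upwards [h x hxΩ t bound_lt_t.ne_bot ht_top, self_mem_nhdsWithin] with r hr hr_pos
    rw [Gx_add_t] at hr
    calc _ ≤ A * (∫⁻ y in closedBall x (c * r), g y ∂μ) / μ (closedBall x r) := by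
          rw [← mul_div_assoc]
          gcongr
      _ = _ := by rw [div_measure_closedBall_eq μ x hc (le_of_lt hr_pos), mul_div_assoc, mul_assoc]
  have t_rpow_le : t ^ p ≤ D * A * g x := by
    have lhs_lim := ENNReal.Tendsto.const_mul (density q hqV)
      (.inr (ENNReal.rpow_ne_top_of_nonneg hp.le ht_top))
    have rhs_lim := ENNReal.Tendsto.const_mul (a := D * A)
      (average.comp (tendsto_const_mul_nhdsGT_zero hc))
      (.inr (ENNReal.mul_ne_top ENNReal.ofReal_ne_top hA))
    simpa only [mul_one] using le_of_tendsto_of_tendsto lhs_lim rhs_lim average_le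
  exact bound_lt_t.not_ge (by rwa [one_div, ENNReal.le_rpow_inv_iff hp])

end Differentiation

section Cubes

variable {d : ℕ} (Q : Cube d)

lemma Cube.set_eq_dilate_one : Q.set = Q.dilate 1 := by simp only [Cube.set, Cube.dilate, one_mul]

lemma Cube.dilate_mono {s t : ℝ} (hst : s ≤ t) : Q.dilate s ⊆ Q.dilate t := by
  have hl : s * Q.l ≤ t * Q.l := mul_le_mul_of_nonneg_right hst Q.hl.le
  exact fun y hy i => ⟨by linarith [(hy i).1], by linarith [(hy i).2]⟩

lemma Cube.set_subset_dilate {t : ℝ} (ht : 1 ≤ t) : Q.set ⊆ Q.dilate t :=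
  Q.set_eq_dilate_one ▸ Q.dilate_mono ht

lemma Cube.dilate_eq_iInter (t : ℝ) :
    Q.dilate t = ⋂ i, (EuclideanSpace.proj i : Rd d →L[ℝ] ℝ) ⁻¹'
      Ico (Q.c i - t * Q.l / 2) (Q.c i + t * Q.l / 2) := by
  ext y
  simp [Cube.dilate]

lemma Cube.measurableSet_dilate (t : ℝ) : MeasurableSet (Q.dilate t) := by
  rw [dilate_eq_iInter]
  exact .iInter fun i => (EuclideanSpace.proj i : Rd d →L[ℝ] ℝ).measurable measurableSet_Ico

lemma Cube.convex_dilate (t : ℝ) : Convex ℝ (Q.dilate t) := by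
  rw [dilate_eq_iInter]
  exact convex_iInter fun i =>
    (convex_Ico _ _).linear_preimage (EuclideanSpace.proj i : Rd d →L[ℝ] ℝ).toLinearMap

lemma Cube.dilate_subset_closedBall {t : ℝ} (ht : 0 ≤ t) :
    Q.dilate t ⊆ closedBall (WithLp.toLp 2 Q.c) (√d * (t * Q.l / 2)) := by
  intro y hy
  have half_side_nonneg : 0 ≤ t * Q.l / 2 := by have := Q.hl; positivity
  have dist_coord_le (i : Fin d) : dist (y i) (Q.c i) ≤ t * Q.l / 2 :=
    abs_le.2 ⟨by linarith [(hy i).1], by linarith [(hy i).2]⟩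
  calc dist y (WithLp.toLp 2 Q.c) = √(∑ i, dist (y i) (Q.c i) ^ 2) := EuclideanSpace.dist_eq _ _
    _ ≤ √(∑ _i : Fin d, (t * Q.l / 2) ^ 2) := by
        gcongr with i
        exact dist_coord_le i
    _ = √d * (t * Q.l / 2) := by simp [Real.sqrt_sq half_side_nonneg]

instance Cube.isFiniteMeasure_restrict_dilate (t : ℝ) :
    IsFiniteMeasure (volume.restrict (Q.dilate t)) :=
  isFiniteMeasure_restrict.2 <| ne_of_lt <| isBounded_closedBall.subset
    ((Q.dilate_mono (le_abs_self t)).trans (Q.dilate_subset_closedBall (abs_nonneg t)))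
    |>.measure_lt_top

lemma Cube.ae_set_mem_nhds : ∀ᵐ x, x ∈ Q.set → Q.set ∈ 𝓝 x := by
  rw [set_eq_dilate_one]
  filter_upwards [measure_eq_zero_iff_ae_notMem.1 ((Q.convex_dilate 1).addHaar_frontier volume)]
    with x hx hxQ
  by_contra hn
  exact hx ⟨subset_closure hxQ, fun hi => hn (mem_interior_iff_mem_nhds.1 hi)⟩

lemma exists_cube_between_closedBalls (x : Rd d) {r : ℝ} (hr : 0 < r) :
    ∃ Q : Cube d, closedBall x r ⊆ Q.set ∧ Q.dilate 3 ⊆ closedBall x (6 * (√d + 1) * r) := by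
  refine ⟨⟨fun i => x i, 4 * r, by positivity⟩, fun y hy i => ?_, ?_⟩
  · have := abs_le.1 ((PiLp.dist_apply_le y x i).trans (mem_closedBall.1 hy))
    constructor <;> dsimp only <;> linarith
  · refine (Cube.dilate_subset_closedBall _ (by norm_num)).trans (closedBall_subset_closedBall ?_)
    dsimp only
    linarith

lemma eventually_exists_cube_between_closedBalls {U : Set (Rd d)} {x : Rd d} (hU : U ∈ 𝓝 x) :
    ∀ᶠ r in 𝓝[>] (0 : ℝ), ∃ Q : Cube d, closedBall x r ⊆ Q.set ∧ Q.set ⊆ U ∧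
      Q.dilate 3 ⊆ closedBall x (6 * (√d + 1) * r) := by
  have ball_subset : ∀ᶠ r in 𝓝[>] (0 : ℝ), closedBall x (6 * (√d + 1) * r) ⊆ U :=
    (tendsto_const_mul_nhdsGT_zero (by positivity)).eventually
      (nhdsWithin_le_nhds (eventually_closedBall_subset hU))
  filter_upwards [ball_subset, self_mem_nhdsWithin] with r hr hr_pos
  obtain ⟨Q, hball, hQ⟩ := exists_cube_between_closedBalls x hr_pos
  exact ⟨Q, hball, (Q.set_subset_dilate (by norm_num)).trans (hQ.trans hr), hQ⟩

end Cubes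

section Truncations

variable {d : ℕ} (S : CZO d) {f g : Rd d → ℝ} {ρ : ℝ}

lemma CZO.abs_kernel_le {x y : Rd d} {ε : ℝ} (hε : 0 < ε) (hy : ε < dist x y) :
    |S.K x y| ≤ S.Cst / ε ^ d := by
  have := S.hCst
  calc |S.K x y| ≤ S.Cst / dist x y ^ d := S.size x y (dist_pos.1 (hε.trans hy))
    _ ≤ S.Cst / ε ^ d := by gcongr

lemma CZO.integrableOn_kernel_mul (hf : Integrable f) (x : Rd d) {ε : ℝ} (hε : 0 < ε) :
    IntegrableOn (fun y => S.K x y * f y) {y | ε < dist x y} := by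
  refine hf.integrableOn.bdd_mul (c := S.Cst / ε ^ d)
    S.measK.of_uncurry_left.aestronglyMeasurable ?_
  filter_upwards [ae_restrict_mem (measurableSet_lt_dist_s3 x ε)] with y hy
  exact S.abs_kernel_le hε hy

lemma CZO.trunc_add (hf : Integrable f) (hg : Integrable g) (x : Rd d) {ε : ℝ} (hε : 0 < ε) :
    S.trunc ε (f + g) x = S.trunc ε f x + S.trunc ε g x := by
  simp only [trunc, Pi.add_apply, mul_add]
  exact integral_add (S.integrableOn_kernel_mul hf x hε) (S.integrableOn_kernel_mul hg x hε)

lemma CZO.continuousWithinAt_trunc (hf : Integrable f) (x : Rd d) {ε : ℝ} (hε : 0 < ε) :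
    ContinuousWithinAt (fun δ => S.trunc δ f x) (Ioi ε) ε :=
  continuousWithinAt_Ioi_setIntegral_lt (measurable_const.dist measurable_id)
    (S.integrableOn_kernel_mul hf x hε)

lemma CZO.stronglyMeasurable_trunc (hf : Measurable f) (ε : ℝ) :
    StronglyMeasurable (S.trunc ε f) := by
  have far_meas : MeasurableSet {z : Rd d × Rd d | ε < dist z.1 z.2} :=
    measurableSet_lt measurable_const measurable_dist
  have integrand_meas : Measurable ({z : Rd d × Rd d | ε < dist z.1 z.2}.indicator
      fun z => S.K z.1 z.2 * f z.2) :=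
    (S.measK.mul (hf.comp measurable_snd)).indicator far_meas
  convert integrand_meas.stronglyMeasurable.integral_prod_right' (ν := volume) using 2 with x
  exact (integral_indicator (measurableSet_lt_dist_s3 x ε)).symm

lemma CZO.var_eq_rhoVariation (ρ : ℝ) (f : Rd d → ℝ) (x : Rd d) :
    S.var ρ f x = rhoVariation ρ fun ε => S.trunc ε f x := by
  simp only [var, rhoVariation, IsTruncationSeq, Real.enorm_eq_ofReal_abs]

lemma CZO.var_add_le (hρ : 1 ≤ ρ) (hf : Integrable f) (hg : Integrable g) (x : Rd d) :
    S.var ρ (f + g) x ≤ S.var ρ f x + S.var ρ g x := by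
  simp only [var_eq_rhoVariation]
  exact rhoVariation_le_add hρ fun _ hε => S.trunc_add hf hg x hε

lemma CZO.measurable_var (hρ : 0 < ρ) (hf : Measurable f) (hf_int : Integrable f) :
    Measurable (S.var ρ f) := by
  rw [funext (S.var_eq_rhoVariation ρ f)]
  exact measurable_rhoVariation hρ (S.stronglyMeasurable_trunc hf)
    fun x _ hε => S.continuousWithinAt_trunc hf_int x hε

end Truncations

section WeakType

variable {d : ℕ} {S : CZO d} {f : Rd d → ℝ} {ρ p : ℝ} {A : ℝ≥0∞} {Q Q₀ : Cube d}

/-- `V_ρ(T_*)` satisfies the weak type `(p, p)` inequality with constant `A` (bounding the `p`-th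
power of the weak norm) on integrable functions. It treats the strong `L^q` bound and the weak
`(1,1)` bound uniformly. -/
def CZO.VarWeakType (S : CZO d) (ρ p : ℝ) (A : ℝ≥0∞) : Prop :=
  ∀ g : Rd d → ℝ, Measurable g → Integrable g → ∀ t : ℝ≥0∞, t ≠ 0 → t ≠ ∞ →
    t ^ p * volume {x | t < S.var ρ g x} ≤ A * ∫⁻ x, ‖g x‖ₑ ^ p

lemma CZO.VarBdd.exists_varWeakType (hρ : 0 < ρ) (hp : 0 < p) (h : S.VarBdd ρ p) :
    ∃ A ≠ ∞, S.VarWeakType ρ p A := by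
  obtain ⟨A, -, hA⟩ := h
  refine ⟨ENNReal.ofReal A, ENNReal.ofReal_ne_top, fun g hg hg_int t _ _ => ?_⟩
  calc t ^ p * volume {x | t < S.var ρ g x}
      ≤ t ^ p * volume {x | t ^ p ≤ S.var ρ g x ^ p} := by
        gcongr with x
        exact fun hx => ENNReal.rpow_le_rpow (le_of_lt hx) hp.le
    _ ≤ ∫⁻ x, S.var ρ g x ^ p :=
        mul_meas_ge_le_lintegral ((S.measurable_var hρ hg hg_int).pow_const p) _
    _ ≤ ENNReal.ofReal A * ∫⁻ x, ‖g x‖ₑ ^ p := by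
        simpa only [Real.enorm_eq_ofReal_abs] using hA g hg

lemma CZO.varWeakType_weak11Norm (h : S.weak11Norm ρ ≠ ∞) :
    S.VarWeakType ρ 1 (S.weak11Norm ρ) := by
  intro g hg hg_int t ht ht_top
  simp only [ENNReal.rpow_one]
  have le_of_admissible {A : ℝ≥0∞} (hA : A ∈ {A : ℝ≥0∞ | ∀ f : Rd d → ℝ, Measurable f → ∀ t : ℝ,
      0 < t → ENNReal.ofReal t * volume {x | ENNReal.ofReal t < S.var ρ f x} ≤
        A * ∫⁻ x, ENNReal.ofReal |f x|}) :
      t * volume {x | t < S.var ρ g x} ≤ A * ∫⁻ x, ‖g x‖ₑ := by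
    simpa only [ENNReal.ofReal_toReal ht_top, Real.enorm_eq_ofReal_abs] using
      hA g hg t.toReal (ENNReal.toReal_pos ht ht_top)
  rcases eq_or_ne (∫⁻ x, ‖g x‖ₑ) 0 with h0 | h0
  · obtain ⟨A, hA, -⟩ := sInf_lt_iff.1 (lt_top_iff_ne_top.2 h)
    simpa only [h0, mul_zero] using le_of_admissible hA
  · rw [← ENNReal.div_le_iff_le_mul (.inl h0) (.inl hg_int.2.ne)]
    exact le_sInf fun A hA => ENNReal.div_le_of_le_mul (le_of_admissible hA)

lemma CZO.ae_restrict_var_le_grandMaxLoc (S : CZO d) (ρ : ℝ) (f : Rd d → ℝ) {x : Rd d}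
    (hx : x ∈ Q.set) (hQ : Q.set ⊆ Q₀.set) :
    ∀ᵐ y ∂volume.restrict Q.set,
      S.var ρ ((Q₀.dilate 3 \ Q.dilate 3).indicator f) y ≤ S.grandMaxLoc ρ Q₀ f x := by
  filter_upwards [ENNReal.ae_le_essSup (μ := volume.restrict Q.set)
    (S.var ρ ((Q₀.dilate 3 \ Q.dilate 3).indicator f))] with y hy
  rw [grandMaxLoc, if_pos (hQ hx)]
  exact hy.trans (le_iSup₂_of_le Q ⟨hx, hQ⟩ le_rfl)

lemma CZO.ae_restrict_var_le_grandMaxLoc_add (S : CZO d) (hρ : 1 ≤ ρ)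
    (hf : IntegrableOn f (Q₀.dilate 3)) {x : Rd d} (hx : x ∈ Q.set) (hQ : Q.set ⊆ Q₀.set) :
    ∀ᵐ y ∂volume.restrict Q.set, S.var ρ ((Q₀.dilate 3).indicator f) y ≤
      S.grandMaxLoc ρ Q₀ f x + S.var ρ ((Q.dilate 3).indicator ((Q₀.dilate 3).indicator f)) y := by
  have meas_Q₃ := Q.measurableSet_dilate 3
  have meas_Q₀₃ := Q₀.measurableSet_dilate 3
  set near := (Q.dilate 3).indicator ((Q₀.dilate 3).indicator f)
  set far := (Q₀.dilate 3 \ Q.dilate 3).indicator f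
  have near_int : Integrable near := (hf.integrable_indicator meas_Q₀₃).indicator meas_Q₃
  have far_int : Integrable far :=
    (hf.mono_set sdiff_subset).integrable_indicator (meas_Q₀₃.diff meas_Q₃)
  filter_upwards [S.ae_restrict_var_le_grandMaxLoc ρ f hx hQ] with y far_le
  calc S.var ρ ((Q₀.dilate 3).indicator f) y = S.var ρ (near + far) y := by
        rw [indicator_eq_indicator_indicator_add_sdiff _ (Q.dilate 3)]
    _ ≤ S.var ρ near y + S.var ρ far y := S.var_add_le hρ near_int far_int y
    _ ≤ S.var ρ near y + S.grandMaxLoc ρ Q₀ f x := by gcongr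
    _ = S.grandMaxLoc ρ Q₀ f x + S.var ρ near y := add_comm _ _

lemma CZO.VarWeakType.rpow_mul_volume_inter_cube_le (h : S.VarWeakType ρ p A) (hρ : 1 ≤ ρ)
    (hp : 0 < p) (hf : Measurable f) (hf_int : IntegrableOn f (Q₀.dilate 3)) {x : Rd d}
    (hx : x ∈ Q.set) (hQ : Q.set ⊆ Q₀.set) {t : ℝ≥0∞} (ht : t ≠ 0) (ht_top : t ≠ ∞) :
    t ^ p * volume ({y | S.grandMaxLoc ρ Q₀ f x + t < S.var ρ ((Q₀.dilate 3).indicator f) y} ∩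
        Q.set) ≤
      A * ∫⁻ y in Q.dilate 3, ‖(Q₀.dilate 3).indicator f y‖ₑ ^ p := by
  have meas_Q₃ := Q.measurableSet_dilate 3
  have meas_Q₀₃ := Q₀.measurableSet_dilate 3
  set F := (Q₀.dilate 3).indicator f
  have superlevel_le : volume ({y | S.grandMaxLoc ρ Q₀ f x + t < S.var ρ F y} ∩ Q.set) ≤
      volume {y | t < S.var ρ ((Q.dilate 3).indicator F) y} := by
    refine measure_mono_ae ?_
    filter_upwards [ae_imp_of_ae_restrict (S.ae_restrict_var_le_grandMaxLoc_add hρ hf_int hx hQ)]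
      with y var_le hy
    exact lt_of_add_lt_add_left (lt_of_lt_of_le hy.1 (var_le hy.2))
  calc _ ≤ t ^ p * volume {y | t < S.var ρ ((Q.dilate 3).indicator F) y} := by gcongr
    _ ≤ A * ∫⁻ y, ‖(Q.dilate 3).indicator F y‖ₑ ^ p :=
        h _ ((hf.indicator meas_Q₀₃).indicator meas_Q₃)
          ((hf_int.integrable_indicator meas_Q₀₃).indicator meas_Q₃) t ht ht_top
    _ = A * ∫⁻ y in Q.dilate 3, ‖F y‖ₑ ^ p := by rw [lintegral_enorm_indicator_rpow meas_Q₃ F hp]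

lemma CZO.VarWeakType.eventually_rpow_mul_volume_inter_closedBall_le (h : S.VarWeakType ρ p A)
    (hρ : 1 ≤ ρ) (hp : 0 < p) (hf : Measurable f) (hf_int : IntegrableOn f (Q₀.dilate 3))
    {x : Rd d} (hx : Q₀.set ∈ 𝓝 x) {t : ℝ≥0∞} (ht : t ≠ 0) (ht_top : t ≠ ∞) :
    ∀ᶠ r in 𝓝[>] 0,
      t ^ p * volume ({y | S.grandMaxLoc ρ Q₀ f x + t < S.var ρ ((Q₀.dilate 3).indicator f) y} ∩
          closedBall x r) ≤
        A * ∫⁻ y in closedBall x (6 * (√d + 1) * r), ‖(Q₀.dilate 3).indicator f y‖ₑ ^ p := by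
  filter_upwards [eventually_exists_cube_between_closedBalls hx, self_mem_nhdsWithin]
    with r ⟨Q, hball, hQ, hQ₃⟩ hr_pos
  have hxQ : x ∈ Q.set := hball (mem_closedBall_self (le_of_lt hr_pos))
  grw [hball, h.rpow_mul_volume_inter_cube_le hρ hp hf hf_int hxQ hQ ht ht_top, hQ₃]

lemma CZO.VarWeakType.ae_var_le (h : S.VarWeakType ρ p A) (hA : A ≠ ∞) (hρ : 1 ≤ ρ) (hp : 1 ≤ p)
    (hf : Measurable f) (hf_Lp : MemLp f (ENNReal.ofReal p) (volume.restrict (Q₀.dilate 3))) :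
    ∀ᵐ x, x ∈ Q₀.set → S.var ρ ((Q₀.dilate 3).indicator f) x ≤
      (ENNReal.ofReal ((6 * (√d + 1)) ^ d) * A * ‖f x‖ₑ ^ p) ^ (1 / p) +
        S.grandMaxLoc ρ Q₀ f x := by
  have hp_pos : 0 < p := by positivity
  have meas_Q₀₃ := Q₀.measurableSet_dilate 3
  have f_int : IntegrableOn f (Q₀.dilate 3) := hf_Lp.integrable (by simpa using hp)
  have lintegral_fin : ∫⁻ y, ‖(Q₀.dilate 3).indicator f y‖ₑ ^ p ≠ ∞ := by
    rw [lintegral_enorm_indicator_rpow meas_Q₀₃ f hp_pos]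
    simpa [hp_pos.le] using (lintegral_rpow_enorm_lt_top_of_eLpNorm_lt_top
      (by simpa using hp_pos) ENNReal.ofReal_ne_top hf_Lp.2).ne
  filter_upwards [Q₀.ae_set_mem_nhds, ae_le_add_of_eventually_closedBall_le
    (Ω := {x | Q₀.set ∈ 𝓝 x}) volume hp_pos (by positivity) hA
    ((hf.indicator meas_Q₀₃).enorm.pow_const p).aemeasurable lintegral_fin
    fun x hx t ht ht_top => h.eventually_rpow_mul_volume_inter_closedBall_le
      hρ hp_pos hf f_int hx ht ht_top] with x hx_nhds hx hxQ₀
  have hxQ₀₃ : x ∈ Q₀.dilate 3 := Q₀.set_subset_dilate (by norm_num) hxQ₀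
  simpa only [indicator_of_mem hxQ₀₃, finrank_euclideanSpace_fin] using hx (hx_nhds hxQ₀)

end WeakType

theorem variation_pointwise_domination_general {d : ℕ} {S : CZO d} {ρ q : ℝ} (hρ : 1 ≤ ρ)
    (hq : 1 ≤ q) (hS : S.VarBdd ρ q) {Q₀ : Cube d} {f : Rd d → ℝ} (hf : Measurable f)
    (hf_Lq : MemLp f (ENNReal.ofReal q) (volume.restrict (Q₀.dilate 3))) :
    ∀ᵐ x ∂(volume : Measure (Rd d)), x ∈ Q₀.set →
      S.var ρ ((Q₀.dilate 3).indicator f) x ≤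
        ENNReal.ofReal ((6 * (√d + 1)) ^ d) * S.weak11Norm ρ * ENNReal.ofReal |f x| +
          S.grandMaxLoc ρ Q₀ f x := by
  simp only [← Real.enorm_eq_ofReal_abs]
  rcases eq_or_ne (S.weak11Norm ρ) ∞ with hW | hW
  · obtain ⟨A, hA, hweak⟩ := hS.exists_varWeakType (by positivity) (by positivity)
    filter_upwards [hweak.ae_var_le hA hρ hq hf hf_Lq] with x hx hxQ₀
    have C_ne_zero : ENNReal.ofReal ((6 * (√d + 1)) ^ d) ≠ 0 := by simpa using by positivity
    rcases eq_or_ne (f x) 0 with hfx | hfx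
    · have hq_pos : 0 < q := by positivity
      simpa [hfx, hq_pos] using hx hxQ₀
    · simp [hW, hfx, ENNReal.mul_top C_ne_zero]
  · have f_L1 : MemLp f (ENNReal.ofReal 1) (volume.restrict (Q₀.dilate 3)) :=
      hf_Lq.mono_exponent (ENNReal.ofReal_le_ofReal hq)
    simpa only [ENNReal.rpow_one, one_div_one] using
      (CZO.varWeakType_weak11Norm hW).ae_var_le hW hρ le_rfl hf f_L1

/-- Pointwise domination of the variation by the weak `(1,1)` norm and the
local grand maximal truncated operator. -/
theorem variation_pointwise_domination (d : ℕ) (hd : 0 < d) :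
    ∃ C : ℝ, 0 < C ∧ ∀ (S : CZO d) (ρ q : ℝ), 2 < ρ → 1 < q → S.VarBdd ρ q →
      ∀ (Q₀ : Cube d) (f : Rd d → ℝ), Measurable f → (∃ M : ℝ, ∀ x, |f x| ≤ M) →
        (∀ x, x ∉ Q₀.set → f x = 0) →
        ∀ᵐ x ∂(volume : Measure (Rd d)), x ∈ Q₀.set →
          S.var ρ ((Q₀.dilate 3).indicator f) x ≤
            ENNReal.ofReal C * S.weak11Norm ρ * ENNReal.ofReal |f x| +
              S.grandMaxLoc ρ Q₀ f x := by
  refine ⟨(6 * (√d + 1)) ^ d, by positivity, fun S ρ q hρ hq hS Q₀ f hf ⟨M, hM⟩ _ => ?_⟩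
  exact variation_pointwise_domination_general (by linarith) hq.le hS hf
    (.of_bound hf.aestronglyMeasurable M (.of_forall hM))
end
end
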